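/- Let R be a commutative noetherian ring. The maps φ and ψ, defined by φ(X)(p) = max_{X∈X} pd_{R_p} X_p and ψ(f) = { M ∈ mod R : pd_{R_p} M_p ≤ f(p) for all p ∈ Spec R }, are mutually inverse bijections between the set of resolving subcategories of mod R contained in PD(R) and the set of grade consistent functions on Spec R. -/

import Mathlib

universe u

open CategoryTheory

namespace ResolvPaper

variable (R : Type u) [CommRing R]

/-- `IsSES f g` means `0 → A → B → C → 0` is a short exact sequence. -/
def IsSES {R : Type u} [CommRing R] {A B C : Type u} [AddCommGroup A] [Module R A]
    [AddCommGroup B] [Module R B] [AddCommGroup C] [Module R C]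
    (f : A →ₗ[R] B) (g : B →ₗ[R] C) : Prop :=
  Function.Injective f ∧ Function.Surjective g ∧ LinearMap.range f = LinearMap.ker g

/-- A resolving subcategory of `mod R`, viewed as a set of bundled modules
closed under isomorphism, containing the finitely generated projective modules, and closed
under direct summands, extensions and syzygies. -/
structure IsResolving (𝒳 : Set (ModuleCat.{u} R)) : Prop where
  fg : ∀ M ∈ 𝒳, Module.Finite R M
  iso_closed : ∀ M N : ModuleCat.{u} R, Nonempty (M ≃ₗ[R] N) → M ∈ 𝒳 → N ∈ 𝒳
  proj_mem : ∀ M : ModuleCat.{u} R, Module.Finite R M → Module.Projective R M → M ∈ 𝒳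
  summand_closed : ∀ M N : ModuleCat.{u} R, ModuleCat.of R (↥M × ↥N) ∈ 𝒳 → M ∈ 𝒳
  ext_closed : ∀ (A B C : ModuleCat.{u} R) (f : A →ₗ[R] B) (g : B →ₗ[R] C),
    IsSES f g → A ∈ 𝒳 → C ∈ 𝒳 → B ∈ 𝒳
  syzygy_closed : ∀ (K P M : ModuleCat.{u} R) (f : K →ₗ[R] P) (g : P →ₗ[R] M),
    IsSES f g → Module.Finite R K → Module.Finite R P → Module.Projective R P →
    M ∈ 𝒳 → K ∈ 𝒳

/-- The resolving closure: the smallest resolving subcategory containing `S`. -/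
def resClosure (S : Set (ModuleCat.{u} R)) : Set (ModuleCat.{u} R) :=
  ⋂₀ {𝒳 | IsResolving R 𝒳 ∧ S ⊆ 𝒳}

/-- An extension-closed subcategory of `mod R`: closed under isomorphism,
direct summands and extensions. -/
def IsExtClosed (𝒳 : Set (ModuleCat.{u} R)) : Prop :=
  (∀ M N : ModuleCat.{u} R, Nonempty (M ≃ₗ[R] N) → M ∈ 𝒳 → N ∈ 𝒳) ∧
  (∀ M N : ModuleCat.{u} R, ModuleCat.of R (↥M × ↥N) ∈ 𝒳 → M ∈ 𝒳) ∧
  (∀ (A B C : ModuleCat.{u} R) (f : A →ₗ[R] B) (g : B →ₗ[R] C),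
    IsSES f g → A ∈ 𝒳 → C ∈ 𝒳 → B ∈ 𝒳)

/-- The extension closure of a set of modules. -/
def extClosure (S : Set (ModuleCat.{u} R)) : Set (ModuleCat.{u} R) :=
  ⋂₀ {𝒳 | IsExtClosed R 𝒳 ∧ S ⊆ 𝒳}

/-- `add R`: direct summands of finite free modules. -/
def addR : Set (ModuleCat.{u} R) :=
  {M | ∃ (n : ℕ) (N : ModuleCat.{u} R), Nonempty ((↥M × ↥N) ≃ₗ[R] (Fin n → R))}

/-- `pdLE n M` : the projective dimension of `M` is at most `n`. -/
def pdLE : ℕ → ModuleCat.{u} R → Prop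
  | 0, M => Module.Projective R M
  | n+1, M => ∃ (K P : ModuleCat.{u} R) (f : K →ₗ[R] P) (g : P →ₗ[R] M),
      Module.Finite R P ∧ Module.Projective R P ∧ IsSES f g ∧ pdLE n K

/-- The projective dimension, an element of `WithBot ℕ∞`; the zero module
has projective dimension `⊥ = -∞`. -/
noncomputable def pdim (M : ModuleCat.{u} R) : WithBot ℕ∞ :=
  sInf {x : WithBot ℕ∞ | (x = ⊥ ∧ Subsingleton M) ∨ ∃ n : ℕ, x = (n : ℕ∞) ∧ pdLE R n M}

/-- The depth of `M` with respect to the ideal `I`: the supremum of lengths of weakly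
`M`-regular sequences contained in `I`.  The zero module has depth `∞`. -/
noncomputable def depthE (I : Ideal R) (M : Type u) [AddCommGroup M] [Module R M] : ℕ∞ :=
  sSup {x : ℕ∞ | ∃ rs : List R, (∀ r ∈ rs, r ∈ I) ∧
    RingTheory.Sequence.IsWeaklyRegular M rs ∧ x = rs.length}

/-- The grade of an ideal: the length of a maximal `R`-regular sequence in `I`. -/
noncomputable def gradeE (I : Ideal R) : ℕ∞ := depthE R I R

/-- A grade consistent function on `Spec R`. -/
def GradeConsistent (f : PrimeSpectrum R → ℕ) : Prop :=
  (∀ p : PrimeSpectrum R, (f p : ℕ∞) ≤ gradeE R p.asIdeal) ∧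
  (∀ p q : PrimeSpectrum R, p.asIdeal ≤ q.asIdeal → f p ≤ f q)

/-- The localization of a module at a prime, as a module over the local ring `R_p`. -/
noncomputable abbrev localizeM (p : PrimeSpectrum R) (M : ModuleCat.{u} R) :
    ModuleCat.{u} (Localization.AtPrime p.asIdeal) :=
  ModuleCat.of (Localization.AtPrime p.asIdeal) (LocalizedModule p.asIdeal.primeCompl M)

/-- `pd_{R_p} M_p`. -/
noncomputable def localPdim (p : PrimeSpectrum R) (M : ModuleCat.{u} R) : WithBot ℕ∞ :=
  pdim (Localization.AtPrime p.asIdeal) (localizeM R p M)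

/-- `depth_{R_p} M_p`. -/
noncomputable def localDepth (p : PrimeSpectrum R) (M : ModuleCat.{u} R) : ℕ∞ :=
  depthE (Localization.AtPrime p.asIdeal)
    (IsLocalRing.maximalIdeal (Localization.AtPrime p.asIdeal))
    (LocalizedModule p.asIdeal.primeCompl M)

/-- The height of a prime ideal. -/
noncomputable def heightE (p : PrimeSpectrum R) : ℕ∞ := Order.height p

/-- `PD(R)` : finitely generated modules of finite projective dimension. -/
def PDcat : Set (ModuleCat.{u} R) :=
  {M | Module.Finite R M ∧ ∃ n : ℕ, pdLE R n M}

/-- `MCM(R)` : maximal Cohen-Macaulay modules. -/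
def MCMcat : Set (ModuleCat.{u} R) :=
  {M | Module.Finite R M ∧ ∀ p : PrimeSpectrum R, heightE R p ≤ localDepth R p M}

/-- The nonfree locus of a module. -/
def NF (M : ModuleCat.{u} R) : Set (PrimeSpectrum R) :=
  {p | ¬ Module.Free (Localization.AtPrime p.asIdeal) (LocalizedModule p.asIdeal.primeCompl M)}

/-- The infinite projective dimension locus of a module. -/
def IPD (M : ModuleCat.{u} R) : Set (PrimeSpectrum R) :=
  {p | localPdim R p M = (⊤ : WithBot ℕ∞)}

/-- The infinite projective dimension locus of a collection of modules. -/
def IPDcat (𝒳 : Set (ModuleCat.{u} R)) : Set (PrimeSpectrum R) :=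
  ⋃ M ∈ 𝒳, IPD R M

/-- The modules in `mod R` whose infinite projective dimension locus lies in `W`. -/
def IPDinv (W : Set (PrimeSpectrum R)) : Set (ModuleCat.{u} R) :=
  {M | Module.Finite R M ∧ IPD R M ⊆ W}

/-- A specialization closed subset of `Spec R`. -/
def SpecClosed (W : Set (PrimeSpectrum R)) : Prop :=
  ∀ p ∈ W, ∀ q : PrimeSpectrum R, p.asIdeal ≤ q.asIdeal → q ∈ W

/-- Membership in `add 𝒳_p`: direct summands of localizations of finite direct sums
of members of `𝒳`. -/
def memAddLocal (𝒳 : Set (ModuleCat.{u} R)) (p : PrimeSpectrum R)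
    (N : ModuleCat.{u} (Localization.AtPrime p.asIdeal)) : Prop :=
  ∃ (n : ℕ) (X : Fin n → ModuleCat.{u} R), (∀ i, X i ∈ 𝒳) ∧
    ∃ (N' : ModuleCat.{u} (Localization.AtPrime p.asIdeal)),
      Nonempty ((↥N × ↥N') ≃ₗ[Localization.AtPrime p.asIdeal]
        ((i : Fin n) → LocalizedModule p.asIdeal.primeCompl (X i)))

/-- `K` is an `n`-th syzygy of `M` computed from a minimal free resolution over the
local ring `S`. -/
def IsMinSyz (S : Type u) [CommRing S] [IsLocalRing S] :
    ℕ → ModuleCat.{u} S → ModuleCat.{u} S → Prop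
  | 0, M, K => Nonempty (K ≃ₗ[S] M)
  | n+1, M, K => ∃ (F : ModuleCat.{u} S) (g : F →ₗ[S] M) (K' : ModuleCat.{u} S)
      (i : K' →ₗ[S] F),
      Module.Finite S F ∧ Module.Free S F ∧ Function.Surjective g ∧
      (LinearMap.ker g ≤ (IsLocalRing.maximalIdeal S) • (⊤ : Submodule S F)) ∧
      Function.Injective i ∧ LinearMap.range i = LinearMap.ker g ∧
      IsMinSyz S n K' K

/-- `K` is an `n`-th syzygy of `M` in some projective resolution (over any ring). -/
def IsSyz : ℕ → ModuleCat.{u} R → ModuleCat.{u} R → Prop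
  | 0, M, K => Nonempty (K ≃ₗ[R] M)
  | n+1, M, K => ∃ (F : ModuleCat.{u} R) (g : F →ₗ[R] M) (K' : ModuleCat.{u} R)
      (i : K' →ₗ[R] F),
      Module.Finite R F ∧ Module.Projective R F ∧ Function.Surjective g ∧
      Function.Injective i ∧ LinearMap.range i = LinearMap.ker g ∧
      IsSyz n K' K

/-- `T` is (isomorphic to) the Auslander transpose of `M`, computed from a minimal
free presentation over the local ring `S`. -/
def IsTranspose (S : Type u) [CommRing S] [IsLocalRing S] (M T : ModuleCat.{u} S) : Prop :=
  ∃ (F1 F0 : ModuleCat.{u} S) (d : F1 →ₗ[S] F0) (e : F0 →ₗ[S] M),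
    Module.Finite S F0 ∧ Module.Free S F0 ∧ Module.Finite S F1 ∧ Module.Free S F1 ∧
    Function.Surjective e ∧ LinearMap.range d = LinearMap.ker e ∧
    LinearMap.ker e ≤ (IsLocalRing.maximalIdeal S) • (⊤ : Submodule S F0) ∧
    LinearMap.ker d ≤ (IsLocalRing.maximalIdeal S) • (⊤ : Submodule S F1) ∧
    Nonempty (T ≃ₗ[S] ((Module.Dual S F1) ⧸ LinearMap.range d.dualMap))

/-- `T` is (isomorphic to) `Tr Ω^n M` over the local ring `S`. -/
def IsTrOmega (S : Type u) [CommRing S] [IsLocalRing S] (n : ℕ) (M T : ModuleCat.{u} S) :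
    Prop :=
  ∃ K : ModuleCat.{u} S, IsMinSyz S n M K ∧ IsTranspose S K T

/-- Resolving subcategory `𝒳` is dominant on `W ⊆ Spec R`. -/
def DominantOn (𝒳 : Set (ModuleCat.{u} R)) (W : Set (PrimeSpectrum R)) : Prop :=
  ∀ p ∈ W, ∃ (n : ℕ) (K : ModuleCat.{u} (Localization.AtPrime p.asIdeal)),
    IsMinSyz (Localization.AtPrime p.asIdeal) n
      (ModuleCat.of (Localization.AtPrime p.asIdeal)
        (IsLocalRing.ResidueField (Localization.AtPrime p.asIdeal))) K ∧
    memAddLocal R 𝒳 p K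

/-- Dominant resolving subcategory. -/
def Dominant (𝒳 : Set (ModuleCat.{u} R)) : Prop := DominantOn R 𝒳 Set.univ

/-- A (noetherian) local ring is Cohen-Macaulay if its depth equals its Krull dimension. -/
def IsCMLocalRing (S : Type u) [CommRing S] [IsLocalRing S] : Prop :=
  IsNoetherianRing S ∧
    ((depthE S (IsLocalRing.maximalIdeal S) S : WithBot ℕ∞) = ringKrullDim S)

/-- A regular local ring: a noetherian local ring whose maximal ideal is generated by
`dim S` elements. -/
def IsRegLocalRing (S : Type u) [CommRing S] [IsLocalRing S] : Prop :=
  IsNoetherianRing S ∧ ∃ s : Finset S,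
    Ideal.span (s : Set S) = IsLocalRing.maximalIdeal S ∧
    ringKrullDim S = (s.card : WithBot ℕ∞)

/-- The singular locus of `R`. -/
def SingLocus : Set (PrimeSpectrum R) :=
  {p | ¬ IsRegLocalRing (Localization.AtPrime p.asIdeal)}

/-- A hypersurface local ring: the completion is a quotient of a regular local ring by
one element. -/
def IsHypersurfaceLocalRing (S : Type u) [CommRing S] [IsLocalRing S] : Prop :=
  ∃ (T : Type u) (_ : CommRing T) (_ : IsLocalRing T) (f : T),
    IsRegLocalRing T ∧
    Nonempty ((AdicCompletion (IsLocalRing.maximalIdeal S) S) ≃+* (T ⧸ Ideal.span {f}))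

/-- A complete intersection local ring: the completion is a quotient of a regular local
ring by a regular sequence. -/
def IsCompleteIntersectionLocalRing (S : Type u) [CommRing S] [IsLocalRing S] : Prop :=
  ∃ (T : Type u) (_ : CommRing T) (_ : IsLocalRing T) (rs : List T),
    IsRegLocalRing T ∧ RingTheory.Sequence.IsRegular T rs ∧
    Nonempty ((AdicCompletion (IsLocalRing.maximalIdeal S) S) ≃+*
      (T ⧸ Ideal.ofList rs))

/-- The subquotient `A / (A ⊓ B)` of two submodules, used for homology. -/
def subquot {S M : Type u} [CommRing S] [AddCommGroup M] [Module S M]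
    (A B : Submodule S M) : Type u :=
  A ⧸ (B.comap A.subtype)

noncomputable instance {S M : Type u} [CommRing S] [AddCommGroup M] [Module S M]
    (A B : Submodule S M) : AddCommGroup (subquot A B) :=
  inferInstanceAs (AddCommGroup (A ⧸ (B.comap A.subtype)))

noncomputable instance {S M : Type u} [CommRing S] [AddCommGroup M] [Module S M]
    (A B : Submodule S M) : Module S (subquot A B) :=
  inferInstanceAs (Module S (A ⧸ (B.comap A.subtype)))

/-- `E` is (isomorphic to) `Ext^{j+1}_S(M, S)`, computed from a finite free resolution. -/
def IsExtPos (S : Type u) [CommRing S] (j : ℕ) (M E : ModuleCat.{u} S) : Prop :=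
  ∃ (F : ℕ → ModuleCat.{u} S) (d : ∀ i : ℕ, (F (i+1) : Type u) →ₗ[S] F i)
    (e : (F 0 : Type u) →ₗ[S] M),
    (∀ i, Module.Finite S (F i)) ∧ (∀ i, Module.Free S (F i)) ∧
    Function.Surjective e ∧ LinearMap.range (d 0) = LinearMap.ker e ∧
    (∀ i, LinearMap.range (d (i+1)) = LinearMap.ker (d i)) ∧
    Nonempty (E ≃ₗ[S]
      subquot (LinearMap.ker ((d (j+1)).dualMap)) (LinearMap.range ((d j).dualMap)))

/-- `T` is (isomorphic to) `Tor_n^S(M, N)`, computed from a projective resolution of `M`. -/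
def IsTor (S : Type u) [CommRing S] (n : ℕ) (M N T : ModuleCat.{u} S) : Prop :=
  ∃ (F : ℕ → ModuleCat.{u} S) (d : ∀ i : ℕ, (F (i+1) : Type u) →ₗ[S] F i)
    (e : (F 0 : Type u) →ₗ[S] M),
    (∀ i, Module.Projective S (F i)) ∧
    Function.Surjective e ∧ LinearMap.range (d 0) = LinearMap.ker e ∧
    (∀ i, LinearMap.range (d (i+1)) = LinearMap.ker (d i)) ∧
    (match n with
      | 0 => Nonempty (T ≃ₗ[S] TensorProduct S M N)
      | (j+1) => Nonempty (T ≃ₗ[S]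
          subquot (LinearMap.ker (LinearMap.rTensor (↥N) (d j)))
            (LinearMap.range (LinearMap.rTensor (↥N) (d (j+1))))))

/-- `idLE n M` : the injective dimension of `M` is at most `n`. -/
def idLE (S : Type u) [CommRing S] : ℕ → ModuleCat.{u} S → Prop
  | 0, M => Module.Injective S M
  | n+1, M => ∃ (I C : ModuleCat.{u} S) (f : M →ₗ[S] I) (g : I →ₗ[S] C),
      IsSES f g ∧ Module.Injective S I ∧ idLE S n C

/-- `PD_0^n(R)` over a local ring: modules of projective dimension at most `n` that are
free on the punctured spectrum. -/
def PD0n [IsLocalRing R] (n : ℕ) : Set (ModuleCat.{u} R) :=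
  {M | Module.Finite R M ∧ pdLE R n M ∧
    ∀ p : PrimeSpectrum R, p.asIdeal ≠ IsLocalRing.maximalIdeal R →
      Module.Free (Localization.AtPrime p.asIdeal) (LocalizedModule p.asIdeal.primeCompl M)}

/-- `PD_0(R)` over a local ring: modules of finite projective dimension that are
free on the punctured spectrum. -/
def PD0 [IsLocalRing R] : Set (ModuleCat.{u} R) :=
  {M | Module.Finite R M ∧ (∃ n : ℕ, pdLE R n M) ∧
    ∀ p : PrimeSpectrum R, p.asIdeal ≠ IsLocalRing.maximalIdeal R →
      Module.Free (Localization.AtPrime p.asIdeal) (LocalizedModule p.asIdeal.primeCompl M)}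

/-- The residue field of a local ring, as a bundled module. -/
noncomputable abbrev residueMod (S : Type u) [CommRing S] [IsLocalRing S] : ModuleCat.{u} S :=
  ModuleCat.of S (IsLocalRing.ResidueField S)


/-- The map `ψ` sending a grade consistent function to a subcategory of `PD(R)`. -/
def psiPd (f : PrimeSpectrum R → ℕ) : Set (ModuleCat.{u} R) :=
  {M | Module.Finite R M ∧
    ∀ p : PrimeSpectrum R, localPdim R p M ≤ ((f p : ℕ∞) : WithBot ℕ∞)}

/-!
Let `f = φ(𝒳)`. The module `M` is recovered from the modules `Tr Ω^k Tr Ω^k M`, starting with the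
projective one at `k = pd M` and ending with `M` itself at `k = 0`: neighbouring ones are related
by the sequences `0 → Ext^(k+1)(M, R) → Tr Ω^k M → Ω Tr Ω^(k+1) M → 0`, because `Tr Ω^k` turns
extensions of modules with `Ext^k(-, R) = 0` into extensions. Since `Ext^(k+1)(M, R)` has a
filtration by modules `R/q` with `pd M_q > k`, every `M` in `ψ(f)` is built from the modules
`Tr Ω^k (R/q)` with `k < f(q)`. Conversely `Tr Ω^k (R/p)` has projective dimension `k + 1` at `p`
if `k < grade p`, so `φ(ψ(f)) = f`.

It remains to find `Tr Ω^k (R/p)` in `𝒳` for `k < f(p)`, by noetherian induction on `p` and then on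
`k`. A syzygy `X` of some module in `𝒳` has a class in `Ext^(k+1)(X, R)` with nonzero image in
`Ext^(k+1)(X, κ(p))`. Pulling back covers of `X` along multiplication by elements of `p`, one may
assume that `p` annihilates this class; it is then a map `R/p → Tr Ω^k X` that splits at `p`. So
`Tr Ω^k (R/p)` is, at `p`, a direct summand of `Tr Ω^k Tr Ω^k X`, which lies in `𝒳` by the
induction hypothesis. Multiplication by an element outside `p`, which obstructs a global splitting,
is dealt with by one more pullback, built from the modules `Tr Ω^j (R/q)` with `p ⊊ q`.

The same classes give `f(p) ≤ grade p`: successive syzygies of `X` absorb a maximal regular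
sequence in `p`, modulo which every element of `p` is a zero divisor.
-/

section ShortExactSequences

variable {R} {A B C F X : Type u} [AddCommGroup A] [Module R A] [AddCommGroup B] [Module R B]
  [AddCommGroup C] [Module R C] [AddCommGroup F] [Module R F] [AddCommGroup X] [Module R X]
  {f : A →ₗ[R] B} {g : B →ₗ[R] C}

theorem isSES_of_forall (hf : ∀ a, f a = 0 → a = 0) (hg : Function.Surjective g)
    (hgf : ∀ a, g (f a) = 0) (hker : ∀ b, g b = 0 → ∃ a, f a = b) : IsSES f g := by
  refine ⟨(injective_iff_map_eq_zero f).2 hf, hg, le_antisymm ?_ hker⟩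
  rintro _ ⟨a, rfl⟩
  exact hgf a

theorem isSES_ker_subtype (hg : Function.Surjective g) : IsSES (LinearMap.ker g).subtype g :=
  ⟨Subtype.val_injective, hg, by simp⟩

theorem isSES_inl_snd : IsSES (LinearMap.inl R A B) (LinearMap.snd R A B) :=
  ⟨LinearMap.inl_injective, LinearMap.snd_surjective, LinearMap.range_inl R A B⟩

namespace IsSES

theorem exact (h : IsSES f g) : Function.Exact f g :=
  LinearMap.exact_iff.2 h.2.2.symm

theorem apply_apply_eq_zero (h : IsSES f g) (a : A) : g (f a) = 0 :=
  h.exact.apply_apply_eq_zero a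

theorem exists_preimage (h : IsSES f g) {b : B} (hb : g b = 0) : ∃ a, f a = b :=
  (h.exact b).1 hb

theorem exists_lift (h : IsSES f g) (u : X →ₗ[R] B) (hu : ∀ x, g (u x) = 0) :
    ∃ v : X →ₗ[R] A, ∀ x, f (v x) = u x := by
  let e := LinearEquiv.ofInjective f h.1
  let u' := u.codRestrict (LinearMap.range f) fun x => h.exists_preimage (hu x)
  refine ⟨e.symm.toLinearMap ∘ₗ u', fun x => ?_⟩
  exact (LinearEquiv.ofInjective_apply f _).symm.trans
    (congrArg Subtype.val (e.apply_symm_apply (u' x)))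

theorem exists_desc (h : IsSES f g) (u : B →ₗ[R] X) (hu : ∀ a, u (f a) = 0) :
    ∃ v : C →ₗ[R] X, ∀ b, v (g b) = u b := by
  have hker : LinearMap.ker g ≤ LinearMap.ker u := by
    rw [← h.2.2]
    rintro _ ⟨a, rfl⟩
    exact hu a
  exact ⟨(LinearMap.ker g).liftQ u hker ∘ₗ (g.quotKerEquivOfSurjective h.2.1).symm.toLinearMap,
    fun b => by simp [LinearMap.quotKerEquivOfSurjective_symm_apply]⟩

theorem coprod_surjective (h : IsSES f g) {p : X →ₗ[R] A} (hp : Function.Surjective p)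
    {φ : F →ₗ[R] B} (hφ : Function.Surjective (g ∘ₗ φ)) :
    Function.Surjective ((f ∘ₗ p).coprod φ) := fun b => by
  obtain ⟨y, hy⟩ := hφ (g b)
  obtain ⟨a, ha⟩ := h.exists_preimage (b := b - φ y) (by simpa [sub_eq_zero] using hy.symm)
  obtain ⟨x, rfl⟩ := hp a
  exact ⟨(x, y), by simp [ha]⟩

theorem prodMap_id (h : IsSES f g) :
    IsSES (LinearMap.inl R B F ∘ₗ f) (g.prodMap (LinearMap.id : F →ₗ[R] F)) := by
  refine ⟨LinearMap.inl_injective.comp h.1, h.2.1.prodMap Function.surjective_id, ?_⟩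
  rw [LinearMap.range_comp, h.2.2, LinearMap.ker_prodMap, LinearMap.ker_id, Submodule.map_inl]

theorem finite_left [IsNoetherianRing R] (h : IsSES f g) [Module.Finite R B] :
    Module.Finite R A :=
  Module.Finite.of_injective f h.1

theorem finite_middle (h : IsSES f g) [Module.Finite R A] [Module.Finite R C] :
    Module.Finite R B := by
  have : Module.Finite R (LinearMap.ker g) := by
    rw [← h.2.2]
    infer_instance
  have : Module.Finite R (B ⧸ LinearMap.ker g) :=
    Module.Finite.equiv (g.quotKerEquivOfSurjective h.2.1).symm
  exact Module.Finite.of_submodule_quotient (LinearMap.ker g)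

end IsSES

theorem exists_projective_lift [Module.Projective R X] (hg : Function.Surjective g)
    (u : X →ₗ[R] C) : ∃ v : X →ₗ[R] B, ∀ x, g (v x) = u x :=
  (Module.projective_lifting_property g u hg).imp fun _ => LinearMap.congr_fun

variable (R) in
theorem exists_syzygy (M : Type u) [AddCommGroup M] [Module R M] [Module.Finite R M] :
    ∃ (K F : ModuleCat.{u} R) (i : K →ₗ[R] F) (π : F →ₗ[R] M),
      Module.Finite R F ∧ Module.Projective R F ∧ IsSES i π := by
  obtain ⟨n, π, hπ⟩ := Module.Finite.exists_fin' R M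
  exact ⟨ModuleCat.of R (LinearMap.ker π), ModuleCat.of R (Fin n → R), _, π,
    inferInstanceAs (Module.Finite R (Fin n → R)),
    inferInstanceAs (Module.Projective R (Fin n → R)), isSES_ker_subtype hπ⟩

theorem horseshoe (h : IsSES f g) {KA FA KC FC : Type u}
    [AddCommGroup KA] [Module R KA] [AddCommGroup FA] [Module R FA]
    [AddCommGroup KC] [Module R KC] [AddCommGroup FC] [Module R FC] [Module.Projective R FC]
    {iA : KA →ₗ[R] FA} {πA : FA →ₗ[R] A} (hA : IsSES iA πA)
    {iC : KC →ₗ[R] FC} {πC : FC →ₗ[R] C} (hC : IsSES iC πC) :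
    ∃ (KB : ModuleCat.{u} R) (iB : KB →ₗ[R] FA × FC) (πB : FA × FC →ₗ[R] B)
      (f' : KA →ₗ[R] KB) (g' : KB →ₗ[R] KC), IsSES iB πB ∧ IsSES f' g' ∧
      (∀ x, iB (f' x) = (iA x, 0)) ∧ (∀ x, (iB x).2 = iC (g' x)) ∧
      ∀ x, πB (x, 0) = f (πA x) := by
  obtain ⟨φ, hφ⟩ := exists_projective_lift h.2.1 πC
  let πB : FA × FC →ₗ[R] B := (f ∘ₗ πA).coprod φ
  have hφ' : g ∘ₗ φ = πC := LinearMap.ext hφ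
  have hB : IsSES (LinearMap.ker πB).subtype πB :=
    isSES_ker_subtype (h.coprod_surjective hA.2.1 (hφ' ▸ hC.2.1))
  obtain ⟨f', hf'⟩ := hB.exists_lift (LinearMap.inl R FA FC ∘ₗ iA)
    (fun x => by simp [πB, hA.apply_apply_eq_zero])
  obtain ⟨g', hg'⟩ := hC.exists_lift (LinearMap.snd R FA FC ∘ₗ (LinearMap.ker πB).subtype) (by
    rintro ⟨x, hx⟩
    simpa [πB, h.apply_apply_eq_zero, hφ] using congrArg g (LinearMap.mem_ker.1 hx))
  refine ⟨ModuleCat.of R (LinearMap.ker πB), _, πB, f', g', hB,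
    isSES_of_forall (fun a ha => hA.1 ?_) (fun c => ?_) (fun a => hC.1 ?_) ?_, hf',
    fun x => (hg' x).symm, fun x => by simp [πB]⟩
  · simpa [ha] using (congrArg Prod.fst (hf' a)).symm
  · obtain ⟨a, ha⟩ := h.exists_preimage (b := -φ (iC c)) (by simp [hφ, hC.apply_apply_eq_zero])
    obtain ⟨x, rfl⟩ := hA.2.1 a
    exact ⟨⟨(x, iC c), by simp [πB, ha]⟩, hC.1 (hg' _)⟩
  · simpa [hg'] using congrArg Prod.snd (hf' a)
  · rintro ⟨⟨x, y⟩, hxy⟩ h0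
    obtain rfl : y = 0 := by simpa [h0] using (hg' ⟨(x, y), hxy⟩).symm
    obtain ⟨a, rfl⟩ := hA.exists_preimage (b := x) (h.1 (by simpa [πB] using hxy))
    exact ⟨a, Subtype.val_injective (hf' a)⟩

end ShortExactSequences

section StableRetracts

variable {R} {A B C F K M : Type u} [AddCommGroup A] [Module R A] [AddCommGroup B] [Module R B]
  [AddCommGroup C] [Module R C] [AddCommGroup F] [Module R F] [AddCommGroup K] [Module R K]
  [AddCommGroup M] [Module R M] {s t : R}

/-- Multiplication by `s` on `A` factors through `B` up to finitely generated projective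
summands. For `s = 1` this says that `A` is a direct summand of some `B ⊕ P`; for `B = 0` it says
that `s • id` vanishes in the stable category. -/
def StableRetract (s : R) (A B : Type u) [AddCommGroup A] [Module R A] [AddCommGroup B]
    [Module R B] : Prop :=
  ∃ (P : ModuleCat.{u} R) (a : A →ₗ[R] B × P) (b : B × P →ₗ[R] A),
    Module.Finite R P ∧ Module.Projective R P ∧ ∀ x, b (a x) = s • x

namespace StableRetract

theorem of_comp (a : A →ₗ[R] B) (b : B →ₗ[R] A) (hba : ∀ x, b (a x) = s • x) :
    StableRetract s A B :=
  ⟨ModuleCat.of R PUnit.{u + 1}, a.prod 0, b.coprod 0,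
    inferInstanceAs (Module.Finite R PUnit.{u + 1}),
    inferInstanceAs (Module.Projective R PUnit.{u + 1}), fun x => by simp [hba]⟩

theorem of_linearEquiv (e : A ≃ₗ[R] B) : StableRetract (1 : R) A B :=
  of_comp e.toLinearMap e.symm.toLinearMap (by simp)

theorem of_factor [Module.Finite R F] [Module.Projective R F] (u : A →ₗ[R] F) (v : F →ₗ[R] A)
    (hvu : ∀ x, v (u x) = s • x) : StableRetract s A B :=
  ⟨ModuleCat.of R F, LinearMap.inr R B F ∘ₗ u, v ∘ₗ LinearMap.snd R B F, ‹_›, ‹_›, by simpa⟩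

theorem trans (h : StableRetract s A B) (h' : StableRetract t B C) :
    StableRetract (s * t) A C := by
  obtain ⟨P, a, b, _, _, hba⟩ := h
  obtain ⟨Q, a', b', _, _, hba'⟩ := h'
  let e := LinearEquiv.prodAssoc R C Q P
  refine ⟨ModuleCat.of R (Q × P), e.toLinearMap ∘ₗ a'.prodMap LinearMap.id ∘ₗ a,
    b ∘ₗ b'.prodMap (t • LinearMap.id) ∘ₗ e.symm.toLinearMap,
    inferInstanceAs (Module.Finite R (Q × P)), inferInstanceAs (Module.Projective R (Q × P)),
    fun x => ?_⟩
  have hb' (y : B × P) : (b' (a' y.1), t • y.2) = t • y := by ext <;> simp [hba']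
  simp [hb', hba, mul_smul, smul_comm s t x]

theorem syzygy {K' F' M' : Type u} [AddCommGroup K'] [Module R K'] [AddCommGroup F']
    [Module R F'] [AddCommGroup M'] [Module R M'] [Module.Finite R F] [Module.Projective R F]
    [Module.Projective R F'] {i : K →ₗ[R] F} {π : F →ₗ[R] M} (h : IsSES i π)
    {i' : K' →ₗ[R] F'} {π' : F' →ₗ[R] M'} (h' : IsSES i' π') (hM : StableRetract s M M') :
    StableRetract s K K' := by
  obtain ⟨P, a, b, _, _, hba⟩ := hM
  have hP : IsSES _ (π'.prodMap (LinearMap.id : P →ₗ[R] P)) := h'.prodMap_id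
  obtain ⟨a₀, ha₀⟩ := exists_projective_lift hP.2.1 (a ∘ₗ π)
  obtain ⟨b₀, hb₀⟩ := exists_projective_lift h.2.1 (b ∘ₗ π'.prodMap LinearMap.id)
  have hb₀ (y : F' × P) : π (b₀ y) = b (π' y.1, y.2) := hb₀ y
  have ha₀ (y : F) : (π' (a₀ y).1, (a₀ y).2) = a (π y) := ha₀ y
  obtain ⟨a₁, ha₁⟩ := hP.exists_lift (a₀ ∘ₗ i) fun x => by
    simpa [h.apply_apply_eq_zero] using ha₀ (i x)
  obtain ⟨b₁, hb₁⟩ := h.exists_lift (b₀ ∘ₗ LinearMap.inl R F' P ∘ₗ i') fun x => by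
    calc π (b₀ (i' x, 0)) = b (π' (i' x), 0) := hb₀ _
      _ = b 0 := by rw [h'.apply_apply_eq_zero]; rfl
      _ = 0 := map_zero b
  obtain ⟨v, hv⟩ := h.exists_lift (b₀ ∘ₗ a₀ - s • LinearMap.id) fun x => by
    simp [hb₀, ha₀, hba]
  refine ⟨ModuleCat.of R F, a₁.prod i, b₁.coprod (-v), ‹_›, ‹_›, fun x => h.1 ?_⟩
  have hx : b₀ (i' (a₁ x), 0) = b₀ (a₀ (i x)) := congrArg b₀ (ha₁ x)
  simp [hb₁, hv, hx]

theorem exists_section (h : StableRetract s A PUnit.{u + 1}) {π : F →ₗ[R] A}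
    (hπ : Function.Surjective π) : ∃ σ : A →ₗ[R] F, ∀ x, π (σ x) = s • x := by
  obtain ⟨P, a, b, _, _, hba⟩ := h
  obtain ⟨w, hw⟩ := exists_projective_lift hπ b
  exact ⟨w ∘ₗ a, fun x => by simp [hw, hba]⟩

theorem punit_iff : StableRetract s A PUnit.{u + 1} ↔ ∃ (P : ModuleCat.{u} R) (u : A →ₗ[R] P)
    (v : P →ₗ[R] A), Module.Finite R P ∧ Module.Projective R P ∧ ∀ x, v (u x) = s • x := by
  constructor
  · rintro ⟨P, a, b, h₁, h₂, hba⟩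
    exact ⟨ModuleCat.of R (PUnit.{u + 1} × P), a, b,
      inferInstanceAs (Module.Finite R (PUnit.{u + 1} × P)),
      inferInstanceAs (Module.Projective R (PUnit.{u + 1} × P)), hba⟩
  · rintro ⟨P, u, v, _, _, hvu⟩
    exact of_factor u v hvu

theorem one_punit_iff [Module.Finite R A] :
    StableRetract (1 : R) A PUnit.{u + 1} ↔ Module.Projective R A := by
  rw [punit_iff]
  constructor
  · rintro ⟨P, u, v, _, _, hvu⟩
    exact Module.Projective.of_split u v (by ext; simp [hvu])
  · intro _
    exact ⟨ModuleCat.of R A, LinearMap.id, LinearMap.id, ‹_›, ‹_›, by simp⟩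

theorem add_punit (h : StableRetract s A PUnit.{u + 1}) (h' : StableRetract t A PUnit.{u + 1}) :
    StableRetract (s + t) A PUnit.{u + 1} := by
  obtain ⟨P, u, v, _, _, hvu⟩ := punit_iff.1 h
  obtain ⟨P', u', v', _, _, hvu'⟩ := punit_iff.1 h'
  exact of_factor (F := P × P') (u.prod u') (v.coprod v') fun x => by simp [hvu, hvu', add_smul]

theorem mul_punit_of_isSES {f : A →ₗ[R] B} {g : B →ₗ[R] C} (h : IsSES f g)
    (hA : StableRetract s A PUnit.{u + 1}) (hC : StableRetract t C PUnit.{u + 1}) :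
    StableRetract (s * t) B PUnit.{u + 1} := by
  obtain ⟨P, u, v, _, _, hvu⟩ := punit_iff.1 hA
  obtain ⟨P', u', v', _, _, hvu'⟩ := punit_iff.1 hC
  obtain ⟨φ, hφ⟩ := exists_projective_lift h.2.1 v'
  obtain ⟨r, hr⟩ := h.exists_lift (t • LinearMap.id - φ ∘ₗ u' ∘ₗ g) fun x => by simp [hφ, hvu']
  exact of_factor (F := P × P') ((u ∘ₗ r).prod (u' ∘ₗ g)) ((f ∘ₗ v).coprod (s • φ)) fun x => by
    simp [hvu, hr, smul_sub, mul_smul]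

end StableRetract

/-- Multiplication by `s` on an `n`-th syzygy of `M` factors through a finitely generated
projective module, so that `s` annihilates every `Ext^(n+1)(M, -)`. -/
def IsStableAnn : ∀ (_ : ℕ) (M : Type u) [AddCommGroup M] [Module R M] (_ : R), Prop
  | 0, M, _, _, s => StableRetract s M PUnit.{u + 1}
  | n + 1, M, _, _, s => ∃ (K F : ModuleCat.{u} R) (i : K →ₗ[R] F) (π : F →ₗ[R] M),
      Module.Finite R F ∧ Module.Projective R F ∧ IsSES i π ∧ IsStableAnn n K s

variable {n m : ℕ}

theorem IsStableAnn.of_projective [Module.Finite R A] [Module.Projective R A] (s : R) :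
    IsStableAnn n A s := by
  induction n generalizing A with
  | zero => exact .of_factor LinearMap.id (s • LinearMap.id) (by simp)
  | succ n ih =>
    exact ⟨ModuleCat.of R PUnit.{u + 1}, ModuleCat.of R A, 0, LinearMap.id, ‹_›, ‹_›,
      ⟨Function.injective_of_subsingleton _, Function.surjective_id, by simp⟩, ih⟩

variable [IsNoetherianRing R]

namespace IsStableAnn

theorem of_stableRetract [Module.Finite R A] (h : StableRetract s A B) (hB : IsStableAnn n B t) :
    IsStableAnn n A (s * t) := by
  induction n generalizing A B with
  | zero => exact h.trans hB
  | succ n ih =>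
    obtain ⟨K', F', i', π', _, _, h', hK'⟩ := hB
    obtain ⟨K, F, i, π, _, _, hi⟩ := exists_syzygy R A
    have := hi.finite_left
    exact ⟨K, F, i, π, ‹_›, ‹_›, hi, ih (h.syzygy hi h') hK'⟩

theorem of_linearEquiv [Module.Finite R A] (e : A ≃ₗ[R] B) (h : IsStableAnn n A s) :
    IsStableAnn n B s := by
  have := Module.Finite.equiv e
  simpa using of_stableRetract (.of_linearEquiv e.symm) h

theorem of_punit [Module.Finite R A] (h : StableRetract s A PUnit.{u + 1}) :
    IsStableAnn n A s := by
  simpa using of_stableRetract h (of_projective 1)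

theorem smul [Module.Finite R A] (h : IsStableAnn n A s) (t : R) : IsStableAnn n A (t * s) :=
  of_stableRetract (.of_comp LinearMap.id (t • LinearMap.id) (by simp)) h

protected theorem zero [Module.Finite R A] : IsStableAnn n A (0 : R) :=
  of_punit (.of_comp 0 0 (by simp))

end IsStableAnn

theorem isStableAnn_succ_iff [Module.Finite R F] [Module.Projective R F] {i : K →ₗ[R] F}
    {π : F →ₗ[R] M} (h : IsSES i π) : IsStableAnn (n + 1) M s ↔ IsStableAnn n K s := by
  refine ⟨?_, fun hK => ⟨ModuleCat.of R K, ModuleCat.of R F, i, π, ‹_›, ‹_›, h, hK⟩⟩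
  rintro ⟨K', F', i', π', _, _, h', hK'⟩
  have := h.finite_left
  simpa using
    IsStableAnn.of_stableRetract (.syzygy h h' (.of_linearEquiv (LinearEquiv.refl R M))) hK'

namespace IsStableAnn

theorem succ [Module.Finite R A] (h : IsStableAnn n A s) : IsStableAnn (n + 1) A s := by
  induction n generalizing A with
  | zero => exact of_punit h
  | succ n ih =>
    obtain ⟨K, F, i, π, _, _, hi⟩ := exists_syzygy R A
    have := hi.finite_left
    rw [isStableAnn_succ_iff hi] at h ⊢
    exact ih h

theorem mono (hnm : n ≤ m) [Module.Finite R A] (h : IsStableAnn n A s) : IsStableAnn m A s := by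
  induction hnm with
  | refl => exact h
  | step _ ih => exact ih.succ

protected theorem add [Module.Finite R A] (h : IsStableAnn n A s) (h' : IsStableAnn n A t) :
    IsStableAnn n A (s + t) := by
  induction n generalizing A with
  | zero => exact h.add_punit h'
  | succ n ih =>
    obtain ⟨K, F, i, π, _, _, hi⟩ := exists_syzygy R A
    have := hi.finite_left
    rw [isStableAnn_succ_iff hi] at h h' ⊢
    exact ih h h'

theorem mul_of_isSES {f : A →ₗ[R] B} {g : B →ₗ[R] C} (h : IsSES f g) [Module.Finite R A]
    [Module.Finite R C] (hA : IsStableAnn n A s) (hC : IsStableAnn n C t) :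
    IsStableAnn n B (s * t) := by
  induction n generalizing A B C with
  | zero => exact .mul_punit_of_isSES h hA hC
  | succ n ih =>
    obtain ⟨KA, FA, iA, πA, _, _, hiA⟩ := exists_syzygy R A
    obtain ⟨KC, FC, iC, πC, _, _, hiC⟩ := exists_syzygy R C
    obtain ⟨KB, iB, πB, f', g', hiB, hK, -⟩ := horseshoe h hiA hiC
    have := hiA.finite_left
    have := hiC.finite_left
    rw [isStableAnn_succ_iff hiA] at hA
    rw [isStableAnn_succ_iff hiC] at hC
    rw [isStableAnn_succ_iff hiB]
    exact ih hK hA hC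

end IsStableAnn

/-- The ideal of all `s` that stably annihilate the `n`-th syzygies of `A`. Its vanishing locus is
the set of primes `p` at which `A` has projective dimension greater than `n`. -/
def stableAnn (n : ℕ) (A : Type u) [AddCommGroup A] [Module R A] [Module.Finite R A] :
    Ideal R where
  carrier := {s | IsStableAnn n A s}
  add_mem' := IsStableAnn.add
  zero_mem' := IsStableAnn.zero
  smul_mem' := fun t _ h => h.smul t

theorem mem_stableAnn [Module.Finite R A] : s ∈ stableAnn n A ↔ IsStableAnn n A s :=
  Iff.rfl

theorem stableAnn_mono (hnm : n ≤ m) [Module.Finite R A] :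
    stableAnn (R := R) n A ≤ stableAnn m A :=
  fun _ h => h.mono hnm

end StableRetracts

section Localization

variable {R} {A B C : Type u} [AddCommGroup A] [Module R A] [AddCommGroup B] [Module R B]
  [AddCommGroup C] [Module R C]

theorem IsSES.localize (S : Submonoid R) {f : A →ₗ[R] B} {g : B →ₗ[R] C} (h : IsSES f g) :
    IsSES (LocalizedModule.map S f) (LocalizedModule.map S g) := by
  refine ⟨LocalizedModule.map_injective S f h.1, LocalizedModule.map_surjective S g h.2.1, ?_⟩
  ext x
  exact (LocalizedModule.map_exact S f g h.exact x).symm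

theorem StableRetract.punit_localize (S : Submonoid R) {s : R}
    (h : StableRetract s A PUnit.{u + 1}) :
    StableRetract (algebraMap R (Localization S) s) (LocalizedModule S A) PUnit.{u + 1} := by
  obtain ⟨P, u, v, _, _, hvu⟩ := StableRetract.punit_iff.1 h
  refine .of_factor (F := LocalizedModule S P) (LocalizedModule.map S u)
    (LocalizedModule.map S v) fun a => ?_
  induction a using LocalizedModule.induction_on with
  | _ m t =>
    rw [LocalizedModule.map_mk, LocalizedModule.map_mk, hvu, algebraMap_smul,
      LocalizedModule.smul'_mk]

theorem IsStableAnn.localize (S : Submonoid R) {n : ℕ} {s : R} (h : IsStableAnn n A s) :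
    IsStableAnn n (LocalizedModule S A) (algebraMap R (Localization S) s) := by
  induction n generalizing A with
  | zero => exact StableRetract.punit_localize S h
  | succ n ih =>
    obtain ⟨K, F, i, π, _, _, hi, hK⟩ := h
    exact ⟨ModuleCat.of _ (LocalizedModule S K), ModuleCat.of _ (LocalizedModule S F),
      LocalizedModule.map S i, LocalizedModule.map S π,
      inferInstanceAs (Module.Finite (Localization S) (LocalizedModule S F)),
      inferInstanceAs (Module.Projective (Localization S) (LocalizedModule S F)),
      hi.localize S, ih hK⟩

variable [IsNoetherianRing R]

theorem StableRetract.exists_of_one_punit_localize (S : Submonoid R) [Module.Finite R A]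
    (h : StableRetract (1 : Localization S) (LocalizedModule S A) PUnit.{u + 1}) :
    ∃ s ∈ S, StableRetract s A PUnit.{u + 1} := by
  obtain ⟨_, F, _, π, _, _, hπ⟩ := exists_syzygy R A
  obtain ⟨σ, hσ⟩ := h.exists_section (LocalizedModule.map_surjective S π hπ.2.1)
  have : Module.FinitePresentation R A := Module.finitePresentation_of_finite R A
  obtain ⟨τ, s, hτ⟩ := Module.FinitePresentation.exists_lift_of_isLocalizedModule S
    (LocalizedModule.mkLinearMap S F) (σ.restrictScalars R ∘ₗ LocalizedModule.mkLinearMap S A)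
  have hπτ : (LocalizedModule.mkLinearMap S A).comp (π ∘ₗ τ) =
      (LocalizedModule.mkLinearMap S A).comp ((s : R) • LinearMap.id) := by
    ext a
    have hτa := congrArg (LocalizedModule.map S π) (LinearMap.congr_fun hτ a)
    have hσa := hσ (LocalizedModule.mk a 1)
    simp only [LinearMap.comp_apply, LocalizedModule.mkLinearMap_apply, LocalizedModule.map_mk,
      LinearMap.smul_apply, LinearMap.restrictScalars_apply, Submonoid.smul_def] at hτa hσa ⊢
    rw [hτa, ← algebraMap_smul (Localization S), map_smul, hσa, one_smul]
    simp only [LinearMap.id_apply, algebraMap_smul, LocalizedModule.smul'_mk]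
  obtain ⟨t, ht⟩ := Module.Finite.exists_smul_of_comp_eq_of_isLocalizedModule S _ _ _ hπτ
  refine ⟨t * s, S.mul_mem t.2 s.2, .of_factor τ ((t : R) • π) fun a => ?_⟩
  simpa [Submonoid.smul_def, mul_smul] using LinearMap.congr_fun ht a

theorem IsStableAnn.exists_of_one_localize (S : Submonoid R) {n : ℕ} [Module.Finite R A]
    (h : IsStableAnn n (LocalizedModule S A) (1 : Localization S)) :
    ∃ s ∈ S, IsStableAnn n A s := by
  have : IsNoetherianRing (Localization S) := IsLocalization.isNoetherianRing S _ inferInstance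
  induction n generalizing A with
  | zero => exact StableRetract.exists_of_one_punit_localize S h
  | succ n ih =>
    obtain ⟨K, F, i, π, _, _, hi⟩ := exists_syzygy R A
    have := hi.finite_left
    rw [isStableAnn_succ_iff (hi.localize S)] at h
    simpa only [isStableAnn_succ_iff hi] using ih h

end Localization

section ProjectiveDimension

variable {R} [IsNoetherianRing R] (M : ModuleCat.{u} R) [hM : Module.Finite R M]

theorem pdLE_iff_isStableAnn_one (n : ℕ) : pdLE R n M ↔ IsStableAnn n M (1 : R) := by
  induction n generalizing M with
  | zero => exact StableRetract.one_punit_iff.symm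
  | succ n ih =>
    constructor
    all_goals
      rintro ⟨K, F, i, π, _, _, hi, hK⟩
      have := hi.finite_left
    · exact ⟨K, F, i, π, ‹_›, ‹_›, hi, (ih K).1 hK⟩
    · exact ⟨K, F, i, π, ‹_›, ‹_›, hi, (ih K).2 hK⟩

theorem pdim_le_iff (n : ℕ) :
    pdim R M ≤ ((n : ℕ∞) : WithBot ℕ∞) ↔ IsStableAnn n M (1 : R) := by
  rw [← pdLE_iff_isStableAnn_one]
  refine ⟨fun h => ?_, fun h => sInf_le (Or.inr ⟨n, rfl, h⟩)⟩
  have hlt : pdim R M < ((n + 1 : ℕ) : ℕ∞) := h.trans_lt (by exact_mod_cast n.lt_succ_self)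
  obtain ⟨x, hx, hxn⟩ := sInf_lt_iff.1 hlt
  rw [pdLE_iff_isStableAnn_one]
  rcases hx with ⟨-, _⟩ | ⟨m, rfl, hm⟩
  · exact .of_projective 1
  · have hmn : m < n + 1 := by exact_mod_cast hxn
    exact ((pdLE_iff_isStableAnn_one M m).1 hm).mono (Nat.lt_succ_iff.1 hmn)

theorem localPdim_le_iff (q : PrimeSpectrum R) (n : ℕ) :
    localPdim R q M ≤ ((n : ℕ∞) : WithBot ℕ∞) ↔ ∃ s ∉ q.asIdeal, IsStableAnn n M s := by
  have : IsNoetherianRing (Localization.AtPrime q.asIdeal) :=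
    IsLocalization.isNoetherianRing q.asIdeal.primeCompl _ inferInstance
  refine (pdim_le_iff _ n).trans ⟨IsStableAnn.exists_of_one_localize _, ?_⟩
  rintro ⟨s, hs, h⟩
  obtain ⟨t, ht⟩ := (IsLocalization.map_units (M := q.asIdeal.primeCompl)
    (Localization.AtPrime q.asIdeal) ⟨s, hs⟩).exists_left_inv
  rw [← ht]
  exact (h.localize q.asIdeal.primeCompl).smul t

theorem mem_PDcat_iff : M ∈ PDcat R ↔ ∃ n, IsStableAnn n M (1 : R) := by
  simp only [PDcat, Set.mem_ofPred_eq, hM, true_and, pdLE_iff_isStableAnn_one]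

end ProjectiveDimension

section ResolvingSubcategories

variable {R} {A B C K F M : Type u} [AddCommGroup A] [Module R A] [AddCommGroup B] [Module R B]
  [AddCommGroup C] [Module R C] [AddCommGroup K] [Module R K] [AddCommGroup F] [Module R F]
  [AddCommGroup M] [Module R M] {𝒳 : Set (ModuleCat.{u} R)}

namespace IsResolving

theorem mem_of_linearEquiv (h𝒳 : IsResolving R 𝒳) (e : A ≃ₗ[R] B)
    (hA : ModuleCat.of R A ∈ 𝒳) : ModuleCat.of R B ∈ 𝒳 :=
  h𝒳.iso_closed (ModuleCat.of R A) (ModuleCat.of R B) ⟨e⟩ hA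

theorem mem_of_projective (h𝒳 : IsResolving R 𝒳) [hA : Module.Finite R A]
    [hA' : Module.Projective R A] : ModuleCat.of R A ∈ 𝒳 :=
  h𝒳.proj_mem (ModuleCat.of R A) hA hA'

theorem mem_of_isSES (h𝒳 : IsResolving R 𝒳) {f : A →ₗ[R] B} {g : B →ₗ[R] C} (h : IsSES f g)
    (hA : ModuleCat.of R A ∈ 𝒳) (hC : ModuleCat.of R C ∈ 𝒳) : ModuleCat.of R B ∈ 𝒳 :=
  h𝒳.ext_closed (ModuleCat.of R A) (ModuleCat.of R B) (ModuleCat.of R C) f g h hA hC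

theorem mem_prod (h𝒳 : IsResolving R 𝒳) (hA : ModuleCat.of R A ∈ 𝒳)
    (hB : ModuleCat.of R B ∈ 𝒳) : ModuleCat.of R (A × B) ∈ 𝒳 :=
  h𝒳.mem_of_isSES isSES_inl_snd hA hB

theorem mem_of_retract (h𝒳 : IsResolving R 𝒳) (a : A →ₗ[R] B) (b : B →ₗ[R] A)
    (hba : ∀ x, b (a x) = x) (hB : ModuleCat.of R B ∈ 𝒳) : ModuleCat.of R A ∈ 𝒳 := by
  let c : B →ₗ[R] LinearMap.ker b :=
    (LinearMap.id - a ∘ₗ b).codRestrict _ fun x => by simp [hba]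
  let e : B ≃ₗ[R] A × LinearMap.ker b := LinearEquiv.ofLinearMap (b.prod c)
    (a.coprod (LinearMap.ker b).subtype) (by ext <;> simp [c, hba]) (by ext; simp [c])
  exact h𝒳.summand_closed _ (ModuleCat.of R (LinearMap.ker b)) (h𝒳.mem_of_linearEquiv e hB)

theorem mem_of_stableRetract (h𝒳 : IsResolving R 𝒳) (h : StableRetract (1 : R) A B)
    (hB : ModuleCat.of R B ∈ 𝒳) : ModuleCat.of R A ∈ 𝒳 := by
  obtain ⟨P, a, b, hP, hP', hba⟩ := h
  exact h𝒳.mem_of_retract a b (by simpa using hba) (h𝒳.mem_prod hB (h𝒳.proj_mem P hP hP'))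

variable [IsNoetherianRing R]

theorem mem_syzygy (h𝒳 : IsResolving R 𝒳) {i : K →ₗ[R] F} {π : F →ₗ[R] M} (h : IsSES i π)
    [hF : Module.Finite R F] [hF' : Module.Projective R F] (hM : ModuleCat.of R M ∈ 𝒳) :
    ModuleCat.of R K ∈ 𝒳 :=
  h𝒳.syzygy_closed (ModuleCat.of R K) (ModuleCat.of R F) (ModuleCat.of R M) i π h
    h.finite_left hF hF' hM

/-- The pullback of `B → C` along a surjection `F → C` is `A ⊕ F`, and it is also an extension
of `B` by the syzygy of `C`. -/
theorem mem_left_of_isSES (h𝒳 : IsResolving R 𝒳) {f : A →ₗ[R] B} {g : B →ₗ[R] C}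
    (h : IsSES f g) (hB : ModuleCat.of R B ∈ 𝒳) (hC : ModuleCat.of R C ∈ 𝒳) :
    ModuleCat.of R A ∈ 𝒳 := by
  have : Module.Finite R C := h𝒳.fg _ hC
  obtain ⟨K, F, i, π, _, _, hi⟩ := exists_syzygy R C
  obtain ⟨φ, hφ⟩ := exists_projective_lift h.2.1 π
  obtain ⟨r, hr⟩ := h.exists_lift (φ ∘ₗ i) fun x => by simp [hφ, hi.apply_apply_eq_zero]
  have hpullback : IsSES (r.prod (-i)) (f.coprod φ) := by
    refine isSES_of_forall (fun a ha => hi.1 ?_) (fun b => ?_) (fun a => by simp [hr]) ?_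
    · simpa using congrArg Prod.snd ha
    · obtain ⟨x, hx⟩ := hi.2.1 (g b)
      obtain ⟨a, ha⟩ := h.exists_preimage (b := b - φ x) (by simp [hφ, hx])
      exact ⟨(a, x), by simp [ha]⟩
    · rintro ⟨a, x⟩ hax
      obtain ⟨k, rfl⟩ := hi.exists_preimage (b := x) <| by
        simpa [h.apply_apply_eq_zero, hφ] using congrArg g hax
      have hk : f (r k) = φ (i k) := hr k
      refine ⟨-k, Prod.ext (h.1 ?_) (by simp)⟩
      simpa [neg_eq_iff_add_eq_zero, add_comm, hk] using hax
  exact h𝒳.summand_closed _ (ModuleCat.of R F)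
    (h𝒳.mem_of_isSES hpullback (h𝒳.mem_syzygy hi hC) hB)

end IsResolving

variable [IsNoetherianRing R] {f : PrimeSpectrum R → ℕ}

theorem mem_psiPd_iff {M : ModuleCat.{u} R} :
    M ∈ psiPd R f ↔
      Module.Finite R M ∧ ∀ p : PrimeSpectrum R, ∃ s ∉ p.asIdeal, IsStableAnn (f p) M s :=
  and_congr_right fun _ => forall_congr' fun p => localPdim_le_iff M p (f p)

theorem isResolving_psiPd (f : PrimeSpectrum R → ℕ) : IsResolving R (psiPd R f) where
  fg M hM := hM.1
  iso_closed := by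
    simp only [mem_psiPd_iff]
    rintro M N ⟨e⟩ ⟨_, h⟩
    exact ⟨Module.Finite.equiv e, fun p => (h p).imp fun s hs => ⟨hs.1, hs.2.of_linearEquiv e⟩⟩
  proj_mem M _ _ :=
    mem_psiPd_iff.2 ⟨‹_›, fun p => ⟨1, p.2.one_notMem, .of_projective 1⟩⟩
  summand_closed := by
    simp only [mem_psiPd_iff]
    rintro M N ⟨(_ : Module.Finite R (M × N)), h⟩
    have := Module.Finite.of_surjective (LinearMap.fst R M N) LinearMap.fst_surjective
    refine ⟨this, fun p => (h p).imp fun s hs => ⟨hs.1, ?_⟩⟩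
    have hretract : StableRetract (1 : R) M (M × N) :=
      .of_comp (LinearMap.inl R M N) (LinearMap.fst R M N) (by simp)
    simpa using IsStableAnn.of_stableRetract hretract hs.2
  ext_closed := by
    simp only [mem_psiPd_iff]
    rintro A B C i g h ⟨_, hA⟩ ⟨_, hC⟩
    refine ⟨h.finite_middle, fun p => ?_⟩
    obtain ⟨s, hs, hsA⟩ := hA p
    obtain ⟨t, ht, htC⟩ := hC p
    exact ⟨s * t, p.2.mul_notMem hs ht, hsA.mul_of_isSES h htC⟩
  syzygy_closed := by
    simp only [mem_psiPd_iff]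
    rintro K F M i π h _ _ _ ⟨_, hM⟩
    exact ⟨‹_›, fun p => (hM p).imp fun s hs => ⟨hs.1, (isStableAnn_succ_iff h).1 hs.2.succ⟩⟩

/-- The ideals `stableAnn n M` ascend, hence stabilize, and their union lies in no maximal ideal. -/
theorem psiPd_subset_PDcat (f : PrimeSpectrum R → ℕ) : psiPd R f ⊆ PDcat R := by
  intro M hM
  obtain ⟨_, hann⟩ := mem_psiPd_iff.1 hM
  rw [mem_PDcat_iff]
  obtain ⟨n, hn⟩ := monotone_stabilizes_iff_noetherian.2 ‹IsNoetherianRing R›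
    ⟨fun n => stableAnn n M, fun _ _ h => stableAnn_mono h⟩
  refine ⟨n, (Ideal.eq_top_iff_one (stableAnn n M)).1 ?_⟩
  by_contra hne
  obtain ⟨m, hm, hle⟩ := Ideal.exists_le_maximal _ hne
  obtain ⟨s, hsm, hs⟩ := hann ⟨m, hm.isPrime⟩
  apply hsm
  apply hle
  exact (hn (max n (f ⟨m, hm.isPrime⟩)) (le_max_left _ _)).ge (hs.mono (le_max_right _ _))

end ResolvingSubcategories

section ExtVanishing

open CategoryTheory.Abelian

variable {R} {A B C F K M : Type u} [AddCommGroup A] [Module R A] [AddCommGroup B] [Module R B]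
  [AddCommGroup C] [Module R C] [AddCommGroup F] [Module R F] [AddCommGroup K] [Module R K]
  [AddCommGroup M] [Module R M] {n : ℕ}

/-- `Ext^n(M, R) = 0`. -/
def ExtVanishes (n : ℕ) (M : Type u) [AddCommGroup M] [Module R M] : Prop :=
  Subsingleton (Ext (ModuleCat.of R M) (ModuleCat.of R R) n)

theorem IsSES.shortExact {f : A →ₗ[R] B} {g : B →ₗ[R] C} (h : IsSES f g) :
    ∃ w, (ShortComplex.mk (ModuleCat.ofHom f) (ModuleCat.ofHom g) w).ShortExact :=
  ⟨ModuleCat.hom_ext (LinearMap.ext h.apply_apply_eq_zero),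
    ModuleCat.shortComplex_shortExact _ h.exact h.1 h.2.1⟩

namespace ExtVanishes

theorem linearMap_eq_zero (h : ExtVanishes (R := R) 0 M) (χ : M →ₗ[R] R) : χ = 0 := by
  have hχ := h.elim (Ext.addEquiv₀.symm (ModuleCat.ofHom χ))
    (Ext.addEquiv₀.symm (ModuleCat.ofHom 0))
  exact congrArg ModuleCat.Hom.hom (Ext.addEquiv₀.symm.injective hχ)

theorem exists_extension (h1 : ExtVanishes (R := R) 1 C) {f : A →ₗ[R] B} {g : B →ₗ[R] C}
    (h : IsSES f g) (χ : A →ₗ[R] R) : ∃ ψ : B →ₗ[R] R, ∀ a, ψ (f a) = χ a := by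
  obtain ⟨w, hS⟩ := h.shortExact
  obtain ⟨x, hx⟩ := Ext.contravariant_sequence_exact₁ hS (ModuleCat.of R R)
    (Ext.mk₀ (ModuleCat.ofHom χ)) (n₁ := 1) rfl (h1.elim _ _)
  obtain ⟨ψ, rfl⟩ := Ext.addEquiv₀.symm.surjective x
  rw [Ext.addEquiv₀_symm_apply, Ext.mk₀_comp_mk₀] at hx
  have hψ : ModuleCat.ofHom f ≫ ψ = ModuleCat.ofHom χ :=
    Ext.addEquiv₀.symm.injective (by simpa using hx)
  exact ⟨ψ.hom, fun a => by simpa using congrArg (fun z => z.hom a) hψ⟩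

theorem syzygy (hM : ExtVanishes (R := R) (n + 2) M) {i : K →ₗ[R] F} {π : F →ₗ[R] M}
    (h : IsSES i π) [Module.Projective R F] : ExtVanishes (R := R) (n + 1) K := by
  obtain ⟨w, hS⟩ := h.shortExact
  have : Projective (ModuleCat.of R F) := (IsProjective.iff_projective F).1 inferInstance
  refine subsingleton_of_forall_eq 0 fun x => ?_
  obtain ⟨y, rfl⟩ := Ext.contravariant_sequence_exact₁ hS (ModuleCat.of R R) x
    (n₁ := n + 2) (by omega) (hM.elim _ _)
  rw [Ext.eq_zero_of_projective (P := ModuleCat.of R F) y, Ext.comp_zero]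

theorem of_isSES {f : A →ₗ[R] B} {g : B →ₗ[R] C} (h : IsSES f g) (hA : ExtVanishes (R := R) n A)
    (hC : ExtVanishes (R := R) n C) : ExtVanishes (R := R) n B := by
  obtain ⟨w, hS⟩ := h.shortExact
  refine subsingleton_of_forall_eq 0 fun x => ?_
  obtain ⟨y, rfl⟩ := Ext.contravariant_sequence_exact₂ hS (ModuleCat.of R R) x (hA.elim _ _)
  rw [hC.elim y 0, Ext.comp_zero]

theorem of_subsingleton [Subsingleton M] : ExtVanishes (R := R) n M := by
  refine subsingleton_of_forall_eq 0 fun x => ?_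
  rw [← Ext.mk₀_id_comp x, (ModuleCat.isZero_of_subsingleton (ModuleCat.of R M)).eq_of_src (𝟙 _) 0,
    Ext.mk₀_zero, Ext.zero_comp]

theorem of_linearEquiv (e : A ≃ₗ[R] B) (hA : ExtVanishes (R := R) n A) :
    ExtVanishes (R := R) n B :=
  of_isSES (C := PUnit.{u + 1}) (g := 0)
    (isSES_of_forall (f := e.toLinearMap) (by simp) (fun _ => ⟨0, rfl⟩) (by simp)
      fun b _ => ⟨e.symm b, by simp⟩) hA of_subsingleton

theorem quotient_of_lt_gradeE [IsNoetherianRing R] {p : Ideal R} [hp : p.IsPrime]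
    (h : (n : ℕ∞) < gradeE R p) : ExtVanishes (R := R) n (R ⧸ p) := by
  obtain ⟨_, ⟨rs, hrs, hreg, rfl⟩, hn⟩ := lt_sSup_iff.1 h
  have hlt : p • (⊤ : Submodule R R) < ⊤ := lt_top_iff_ne_top.2 (by simpa using hp.ne_top)
  refine ModuleCat.subsingleton_ext_of_exists_isRegular p (ModuleCat.of R (R ⧸ p)) ?_
    (ModuleCat.of R R) hlt rs hrs ⟨hreg, ?_⟩ n (by exact_mod_cast hn)
  · change Module.support R (R ⧸ p) ⊆ _
    rw [Module.support_eq_zeroLocus, Ideal.annihilator_quotient]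
  · intro htop
    exact hlt.ne (top_le_iff.1 (htop.le.trans (Submodule.smul_mono_left (Ideal.span_le.2 hrs))))

end ExtVanishes

end ExtVanishing

section Transposes

variable {R} {A B C F K M N Q X : Type u} [AddCommGroup A] [Module R A] [AddCommGroup B]
  [Module R B] [AddCommGroup C] [Module R C] [AddCommGroup F] [Module R F] [AddCommGroup K]
  [Module R K] [AddCommGroup M] [Module R M] [AddCommGroup N] [Module R N] [AddCommGroup Q]
  [Module R Q] [AddCommGroup X] [Module R X]

/-- `A → B → C → 0` is exact. -/
structure IsRightExact (d : A →ₗ[R] B) (e : B →ₗ[R] C) : Prop where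
  surjective : Function.Surjective e
  exact : Function.Exact d e

theorem IsSES.isRightExact {f : A →ₗ[R] B} {g : B →ₗ[R] C} (h : IsSES f g) : IsRightExact f g :=
  ⟨h.2.1, h.exact⟩

namespace IsRightExact

theorem of_range_mkQ (d : A →ₗ[R] B) : IsRightExact d (LinearMap.range d).mkQ :=
  ⟨Submodule.mkQ_surjective _, LinearMap.exact_map_mkQ_range d⟩

theorem comp_surjective {i : K →ₗ[R] B} {e : B →ₗ[R] C} (h : IsRightExact i e) {q : A →ₗ[R] K}
    (hq : Function.Surjective q) : IsRightExact (i ∘ₗ q) e :=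
  ⟨h.surjective, hq.comp_exact_iff_exact.2 h.exact⟩

variable {d : A →ₗ[R] B} {e : B →ₗ[R] C} (h : IsRightExact d e)
include h

theorem exists_lift [Module.Projective R X] (u : X →ₗ[R] B) (hu : ∀ x, e (u x) = 0) :
    ∃ v : X →ₗ[R] A, ∀ x, d (v x) = u x := by
  obtain ⟨v, hv⟩ := exists_projective_lift d.surjective_rangeRestrict
    (u.codRestrict (LinearMap.range d) fun x => (h.exact _).1 (hu x))
  exact ⟨v, fun x => congrArg Subtype.val (hv x)⟩

theorem exists_desc (u : B →ₗ[R] X) (hu : ∀ x, u (d x) = 0) :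
    ∃ v : C →ₗ[R] X, ∀ x, v (e x) = u x := by
  refine (isSES_ker_subtype h.surjective).exists_desc u ?_
  rintro ⟨b, hb⟩
  obtain ⟨a, rfl⟩ := (h.exact b).1 hb
  exact hu a

theorem exists_desc_of_comm {A' B' C' : Type u} [AddCommGroup A'] [Module R A'] [AddCommGroup B']
    [Module R B'] [AddCommGroup C'] [Module R C'] {d' : A' →ₗ[R] B'} {e' : B' →ₗ[R] C'}
    (h' : IsRightExact d' e') (a : A →ₗ[R] A') (b : B →ₗ[R] B') (hab : ∀ x, b (d x) = d' (a x)) :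
    ∃ c : C →ₗ[R] C', ∀ x, c (e x) = e' (b x) :=
  h.exists_desc (e' ∘ₗ b) fun x => by simp [hab, h'.exact.apply_apply_eq_zero]

end IsRightExact

/-- `Q` is a transpose of an `n`-th syzygy of `N`, computed from some resolution by finitely
generated projective modules. -/
def IsTrSyz : ∀ (_ : ℕ) (N Q : Type u) [AddCommGroup N] [Module R N] [AddCommGroup Q]
    [Module R Q], Prop
  | 0, N, Q, _, _, _, _ => ∃ (G₁ G₀ : ModuleCat.{u} R) (d : G₁ →ₗ[R] G₀) (e : G₀ →ₗ[R] N)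
      (π : Module.Dual R G₁ →ₗ[R] Q), Module.Finite R G₁ ∧ Module.Projective R G₁ ∧
      Module.Finite R G₀ ∧ Module.Projective R G₀ ∧ IsRightExact d e ∧ IsRightExact d.dualMap π
  | n + 1, N, Q, _, _, _, _ => ∃ (K G : ModuleCat.{u} R) (i : K →ₗ[R] G) (π : G →ₗ[R] N),
      Module.Finite R G ∧ Module.Projective R G ∧ IsSES i π ∧ IsTrSyz n K Q

namespace IsTrSyz

variable {n : ℕ}

theorem zero {G₁ G₀ : Type u} [AddCommGroup G₁] [Module R G₁] [AddCommGroup G₀] [Module R G₀]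
    [Module.Finite R G₁] [Module.Projective R G₁] [Module.Finite R G₀] [Module.Projective R G₀]
    {d : G₁ →ₗ[R] G₀} {e : G₀ →ₗ[R] N} {π : Module.Dual R G₁ →ₗ[R] Q} (h : IsRightExact d e)
    (hπ : IsRightExact d.dualMap π) : IsTrSyz (R := R) 0 N Q :=
  ⟨ModuleCat.of R G₁, ModuleCat.of R G₀, d, e, π, ‹_›, ‹_›, ‹_›, ‹_›, h, hπ⟩

theorem succ {G : Type u} [AddCommGroup G] [Module R G] [Module.Finite R G] [Module.Projective R G]
    {i : K →ₗ[R] G} {π : G →ₗ[R] N} (h : IsSES i π) (hK : IsTrSyz (R := R) n K Q) :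
    IsTrSyz (R := R) (n + 1) N Q :=
  ⟨ModuleCat.of R K, ModuleCat.of R G, i, π, ‹_›, ‹_›, h, hK⟩

theorem finite (h : IsTrSyz (R := R) n N Q) : Module.Finite R Q := by
  induction n generalizing N with
  | zero =>
    obtain ⟨G₁, G₀, d, e, π, _, _, _, _, _, hπ⟩ := h
    exact Module.Finite.of_surjective π hπ.surjective
  | succ n ih =>
    obtain ⟨K, G, i, π, _, _, _, hK⟩ := h
    exact ih hK

theorem prod_projective [Module.Finite R F] [Module.Projective R F]
    (h : IsTrSyz (R := R) n N Q) : IsTrSyz (R := R) n (N × F) Q := by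
  cases n with
  | zero =>
    obtain ⟨G₁, G₀, d, e, π, _, _, _, _, h, hπ⟩ := h
    refine zero (d := LinearMap.inl R G₀ F ∘ₗ d) (e := e.prodMap LinearMap.id) (π := π)
      ⟨h.surjective.prodMap Function.surjective_id, ?_⟩ ⟨hπ.surjective, ?_⟩
    · rw [LinearMap.exact_iff, LinearMap.range_comp, ← LinearMap.exact_iff.1 h.exact,
        LinearMap.ker_prodMap, LinearMap.ker_id, Submodule.map_inl]
    · have hsurj : Function.Surjective (LinearMap.inl R G₀ F).dualMap := fun χ =>
        ⟨χ ∘ₗ LinearMap.fst R G₀ F, by ext; simp⟩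
      simpa [LinearMap.dualMap_comp_dualMap] using hsurj.comp_exact_iff_exact.2 hπ.exact
  | succ n =>
    obtain ⟨K, G, i, π, _, _, hi, hK⟩ := h
    exact succ hi.prodMap_id hK

/-- A map of presentations that lifts multiplication by `s` differs from `s` by a homotopy `w` and
an endomorphism `v` of `G₁` killed by `d`; the latter factors through `Module.Dual R G₁` on
transposes. -/
theorem stableRetract_of_comp {N' Q' : Type u} [AddCommGroup N'] [Module R N'] [AddCommGroup Q']
    [Module R Q'] (h : IsTrSyz (R := R) 0 N Q) (h' : IsTrSyz (R := R) 0 N' Q') (a : N →ₗ[R] N')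
    (b : N' →ₗ[R] N) {s : R} (hba : ∀ x, b (a x) = s • x) : StableRetract s Q Q' := by
  obtain ⟨G₁, G₀, d, e, π, _, _, _, _, h, hπ⟩ := h
  obtain ⟨G₁', G₀', d', e', π', _, _, _, _, h', hπ'⟩ := h'
  obtain ⟨a₀, ha₀⟩ := exists_projective_lift h'.surjective (a ∘ₗ e)
  obtain ⟨b₀, hb₀⟩ := exists_projective_lift h.surjective (b ∘ₗ e')
  obtain ⟨a₁, ha₁⟩ := h'.exists_lift (a₀ ∘ₗ d) fun x => by
    simp [ha₀, h.exact.apply_apply_eq_zero]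
  obtain ⟨b₁, hb₁⟩ := h.exists_lift (b₀ ∘ₗ d') fun x => by
    simp [hb₀, h'.exact.apply_apply_eq_zero]
  obtain ⟨w, hw⟩ := h.exists_lift (b₀ ∘ₗ a₀ - s • LinearMap.id) fun x => by simp [ha₀, hb₀, hba]
  let v := b₁ ∘ₗ a₁ - s • LinearMap.id - w ∘ₗ d
  have hv (x : G₁) : d (v x) = 0 := by simp [v, hb₁, ha₁, hw]
  obtain ⟨a', ha'⟩ := hπ'.exists_desc_of_comm hπ a₀.dualMap a₁.dualMap fun φ => by
    ext x; simp [ha₁]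
  obtain ⟨b', hb'⟩ := hπ.exists_desc_of_comm hπ' b₀.dualMap b₁.dualMap fun φ => by
    ext x; simp [hb₁]
  obtain ⟨v', hv'⟩ := hπ.exists_desc v.dualMap fun φ => by ext x; simp [hv]
  refine ⟨ModuleCat.of R (Module.Dual R G₁), b'.prod v', a'.coprod (-π),
    inferInstanceAs (Module.Finite R (Module.Dual R G₁)),
    inferInstanceAs (Module.Projective R (Module.Dual R G₁)), fun x => ?_⟩
  obtain ⟨φ, rfl⟩ := hπ.surjective x
  have hφ : a₁.dualMap (b₁.dualMap φ) - v.dualMap φ = s • φ + d.dualMap (w.dualMap φ) := by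
    ext x
    simp only [v, LinearMap.sub_apply, LinearMap.add_apply, LinearMap.dualMap_apply,
      LinearMap.smul_apply, LinearMap.comp_apply, LinearMap.id_apply, map_sub, map_smul]
    abel
  calc a' (b' (π φ)) + (-π) (v' (π φ)) = π (a₁.dualMap (b₁.dualMap φ) - v.dualMap φ) := by
        rw [hb', ha', hv', LinearMap.neg_apply, map_sub, sub_eq_add_neg]
    _ = s • π φ := by rw [hφ, map_add, hπ.exact.apply_apply_eq_zero, add_zero, map_smul]

theorem stableRetract {N' Q' : Type u} [AddCommGroup N'] [Module R N'] [AddCommGroup Q']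
    [Module R Q'] (h : IsTrSyz (R := R) n N Q) (h' : IsTrSyz (R := R) n N' Q') {s : R}
    (hN : StableRetract s N N') : StableRetract s Q Q' := by
  induction n generalizing N N' with
  | zero =>
    obtain ⟨P, a, b, _, _, hba⟩ := hN
    exact h.stableRetract_of_comp h'.prod_projective a b hba
  | succ n ih =>
    obtain ⟨K, G, i, π, _, _, hi, hK⟩ := h
    obtain ⟨K', G', i', π', _, _, hi', hK'⟩ := h'
    exact ih hK hK' (StableRetract.syzygy hi hi' hN)

theorem punit_of_projective [Module.Finite R F] [Module.Projective R F] :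
    IsTrSyz (R := R) n F PUnit.{u + 1} := by
  induction n generalizing F with
  | zero =>
    refine zero (G₁ := PUnit.{u + 1}) (d := 0) (e := LinearMap.id) (π := 0)
      ⟨Function.surjective_id, fun b => ?_⟩ ⟨fun _ => ⟨0, rfl⟩, fun φ => ?_⟩
    · simp [eq_comm]
    · simpa using ⟨0, LinearMap.ext fun _ => (map_zero φ).symm⟩
  | succ n ih =>
    exact succ (isSES_of_forall (f := (0 : PUnit.{u + 1} →ₗ[R] F)) (g := LinearMap.id)
      (fun _ _ => rfl) Function.surjective_id (by simp) fun b hb => ⟨0, by simpa using hb.symm⟩) ih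

theorem symm (h : IsTrSyz (R := R) 0 M C) : IsTrSyz (R := R) 0 C M := by
  obtain ⟨G₁, G₀, d, e, π, _, _, _, _, h, hπ⟩ := h
  have hd : d.dualMap.dualMap ∘ₗ (Module.evalEquiv R G₁).toLinearMap =
      (Module.evalEquiv R G₀).toLinearMap ∘ₗ d := by
    ext x χ
    simp
  refine zero hπ (π := e ∘ₗ (Module.evalEquiv R G₀).symm.toLinearMap)
    ⟨h.surjective.comp (Module.evalEquiv R G₀).symm.surjective, ?_⟩
  rw [← (Module.evalEquiv R G₁).surjective.comp_exact_iff_exact]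
  change Function.Exact (d.dualMap.dualMap ∘ₗ (Module.evalEquiv R G₁).toLinearMap) _
  rw [hd]
  exact (Function.Exact.iff_of_ladder_linearEquiv (e₁ := .refl R G₁) (e₂ := Module.evalEquiv R G₀)
    (e₃ := .refl R M) rfl (LinearMap.ext fun x =>
      congrArg e ((Module.evalEquiv R G₀).symm_apply_apply x))).2 h.exact

end IsTrSyz

variable {n : ℕ} {𝒳 : Set (ModuleCat.{u} R)}

/-- `Tr Ω^n N ∈ 𝒳`. This does not depend on the choice of the transpose when `𝒳` is resolving. -/
def TrSyzMem (𝒳 : Set (ModuleCat.{u} R)) (n : ℕ) (N : Type u) [AddCommGroup N] [Module R N] :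
    Prop :=
  ∃ Q ∈ 𝒳, IsTrSyz (R := R) n N Q

namespace TrSyzMem

theorem of_projective (h𝒳 : IsResolving R 𝒳) [Module.Finite R F] [Module.Projective R F] :
    TrSyzMem 𝒳 n F :=
  ⟨ModuleCat.of R PUnit.{u + 1}, h𝒳.mem_of_projective, .punit_of_projective⟩

theorem mem (h𝒳 : IsResolving R 𝒳) (hN : TrSyzMem 𝒳 n N) (h : IsTrSyz (R := R) n N Q) :
    ModuleCat.of R Q ∈ 𝒳 := by
  obtain ⟨Q', hQ', h'⟩ := hN
  exact h𝒳.mem_of_stableRetract (h.stableRetract h' (.of_linearEquiv (.refl R N))) hQ'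

theorem of_syzygy {i : K →ₗ[R] F} {π : F →ₗ[R] N} (h : IsSES i π) [Module.Finite R F]
    [Module.Projective R F] (hK : TrSyzMem 𝒳 n K) : TrSyzMem 𝒳 (n + 1) N := by
  obtain ⟨Q, hQ, hKQ⟩ := hK
  exact ⟨Q, hQ, .succ h hKQ⟩

end TrSyzMem

variable [IsNoetherianRing R]

variable (R) in
theorem exists_isTrSyz (n : ℕ) (N : Type u) [AddCommGroup N] [Module R N] [Module.Finite R N] :
    ∃ Q : ModuleCat.{u} R, IsTrSyz (R := R) n N Q := by
  obtain ⟨K, F, i, π, _, _, h⟩ := exists_syzygy R N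
  have := h.finite_left
  induction n generalizing N K F with
  | zero =>
    obtain ⟨_, G, _, q, _, _, hq⟩ := exists_syzygy R K
    exact ⟨ModuleCat.of R (Module.Dual R G ⧸ LinearMap.range (i ∘ₗ q).dualMap),
      .zero (h.isRightExact.comp_surjective hq.2.1) (.of_range_mkQ _)⟩
  | succ n ih =>
    obtain ⟨K', F', i', π', _, _, h'⟩ := exists_syzygy R K
    obtain ⟨Q, hQ⟩ := ih K K' F' i' π' ‹_› ‹_› h' h'.finite_left
    exact ⟨Q, .succ h hQ⟩

namespace TrSyzMem

theorem of_stableRetract (h𝒳 : IsResolving R 𝒳) {N' : Type u} [AddCommGroup N'] [Module R N']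
    [Module.Finite R N] (h : StableRetract (1 : R) N N') (hN' : TrSyzMem 𝒳 n N') :
    TrSyzMem 𝒳 n N := by
  obtain ⟨Q, hQ⟩ := exists_isTrSyz R n N
  obtain ⟨Q', hQ', h'⟩ := hN'
  exact ⟨Q, h𝒳.mem_of_stableRetract (hQ.stableRetract h' h) hQ', hQ⟩

theorem syzygy (h𝒳 : IsResolving R 𝒳) {i : K →ₗ[R] F} {π : F →ₗ[R] N} (h : IsSES i π)
    [Module.Finite R F] [Module.Projective R F] (hN : TrSyzMem 𝒳 (n + 1) N) :
    TrSyzMem 𝒳 n K := by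
  have := h.finite_left
  obtain ⟨Q, hQ⟩ := exists_isTrSyz R n K
  exact ⟨Q, hN.mem h𝒳 (.succ h hQ), hQ⟩

end TrSyzMem

end Transposes

section TransposesAndExtensions

variable {R} {A B C N N' N'' Q' Q'' : Type u} [AddCommGroup A] [Module R A] [AddCommGroup B]
  [Module R B] [AddCommGroup C] [Module R C] [AddCommGroup N] [Module R N] [AddCommGroup N']
  [Module R N'] [AddCommGroup N''] [Module R N''] [AddCommGroup Q'] [Module R Q']
  [AddCommGroup Q''] [Module R Q''] {f : N' →ₗ[R] N} {g : N →ₗ[R] N''}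

theorem IsRightExact.exists_factorization {d : A →ₗ[R] B} {e : B →ₗ[R] C} (h : IsRightExact d e) :
    ∃ q : A →ₗ[R] LinearMap.ker e, Function.Surjective q ∧ ∀ x, (q x : B) = d x := by
  refine ⟨d.codRestrict _ h.exact.apply_apply_eq_zero, ?_, fun x => rfl⟩
  rintro ⟨b, hb⟩
  obtain ⟨a, rfl⟩ := (h.exact b).1 hb
  exact ⟨a, rfl⟩

theorem IsSES.exists_presentation (h : IsSES f g) {G₁' G₀' G₁'' G₀'' : Type u} [AddCommGroup G₁']
    [Module R G₁'] [AddCommGroup G₀'] [Module R G₀'] [AddCommGroup G₁''] [Module R G₁'']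
    [AddCommGroup G₀''] [Module R G₀''] [Module.Projective R G₁''] [Module.Projective R G₀'']
    {d' : G₁' →ₗ[R] G₀'} {e' : G₀' →ₗ[R] N'} (h' : IsRightExact d' e')
    {d'' : G₁'' →ₗ[R] G₀''} {e'' : G₀'' →ₗ[R] N''} (h'' : IsRightExact d'' e'') :
    ∃ (d : G₁' × G₁'' →ₗ[R] G₀' × G₀'') (e : G₀' × G₀'' →ₗ[R] N), IsRightExact d e ∧
      (∀ x, d (x, 0) = (d' x, 0)) ∧ (∀ x, (d x).2 = d'' x.2) ∧ ∀ x, e (x, 0) = f (e' x) := by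
  obtain ⟨KB, i, e, f', g', hi, hK, hif, hig, he⟩ :=
    horseshoe h (isSES_ker_subtype h'.surjective) (isSES_ker_subtype h''.surjective)
  obtain ⟨q', hq', hqd'⟩ := h'.exists_factorization
  obtain ⟨q'', hq'', hqd''⟩ := h''.exists_factorization
  obtain ⟨ρ, hρ⟩ := exists_projective_lift hK.2.1 q''
  have hρ' : g' ∘ₗ ρ = q'' := LinearMap.ext hρ
  exact ⟨i ∘ₗ (f' ∘ₗ q').coprod ρ, e,
    hi.isRightExact.comp_surjective (hK.coprod_surjective hq' (hρ' ▸ hq'')),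
    fun x => by simp [hif, hqd'], fun x => by simp [hig, hρ, hK.apply_apply_eq_zero, hqd''], he⟩

/-- The cokernel part of the snake lemma; `hδ` says that the connecting map vanishes. -/
theorem IsSES.exists_isSES_coker {A₀ A₁ A₂ B₀ B₁ B₂ C₀ C₁ C₂ : Type u}
    [AddCommGroup A₀] [Module R A₀] [AddCommGroup A₁] [Module R A₁] [AddCommGroup A₂] [Module R A₂]
    [AddCommGroup B₀] [Module R B₀] [AddCommGroup B₁] [Module R B₁] [AddCommGroup B₂] [Module R B₂]
    [AddCommGroup C₀] [Module R C₀] [AddCommGroup C₁] [Module R C₁] [AddCommGroup C₂] [Module R C₂]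
    {dA : A₀ →ₗ[R] A₁} {πA : A₁ →ₗ[R] A₂} (hA : IsRightExact dA πA)
    {dB : B₀ →ₗ[R] B₁} {πB : B₁ →ₗ[R] B₂} (hB : IsRightExact dB πB)
    {dC : C₀ →ₗ[R] C₁} {πC : C₁ →ₗ[R] C₂} (hC : IsRightExact dC πC)
    {i₀ : A₀ →ₗ[R] B₀} {r₀ : B₀ →ₗ[R] C₀} (hr₀ : Function.Surjective r₀)
    {i₁ : A₁ →ₗ[R] B₁} {r₁ : B₁ →ₗ[R] C₁} (h₁ : IsSES i₁ r₁)
    (hi : ∀ x, i₁ (dA x) = dB (i₀ x)) (hr : ∀ x, r₁ (dB x) = dC (r₀ x))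
    (hδ : ∀ y, dC (r₀ y) = 0 → ∃ x, dB y = i₁ (dA x)) :
    ∃ (a : A₂ →ₗ[R] B₂) (b : B₂ →ₗ[R] C₂), IsSES a b := by
  obtain ⟨a, ha⟩ := hA.exists_desc_of_comm hB i₀ i₁ hi
  obtain ⟨b, hb⟩ := hB.exists_desc_of_comm hC r₀ r₁ hr
  refine ⟨a, b, isSES_of_forall (fun x hx => ?_) (fun c => ?_) (fun x => ?_) fun z hz => ?_⟩
  · obtain ⟨u, rfl⟩ := hA.surjective x
    obtain ⟨y, hy⟩ := (hB.exact _).1 (by rwa [ha] at hx)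
    obtain ⟨x, hx⟩ := hδ y (by rw [← hr, hy, h₁.apply_apply_eq_zero])
    rw [h₁.1 (hy.symm.trans hx), hA.exact.apply_apply_eq_zero]
  · obtain ⟨u, rfl⟩ := hC.surjective c
    obtain ⟨v, rfl⟩ := h₁.2.1 u
    exact ⟨πB v, hb v⟩
  · obtain ⟨u, rfl⟩ := hA.surjective x
    rw [ha, hb, h₁.apply_apply_eq_zero, map_zero]
  · obtain ⟨v, rfl⟩ := hB.surjective z
    obtain ⟨w, hw⟩ := (hC.exact _).1 (by rwa [hb] at hz)
    obtain ⟨y, rfl⟩ := hr₀ w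
    obtain ⟨u, hu⟩ := h₁.exists_preimage (b := v - dB y) (by rw [map_sub, hr, hw, sub_self])
    exact ⟨πA u, by rw [ha, hu, map_sub, hB.exact.apply_apply_eq_zero, sub_zero]⟩

theorem isSES_dualMap_snd_inl : IsSES (LinearMap.snd R A B).dualMap (LinearMap.inl R A B).dualMap :=
  isSES_of_forall (fun χ hχ => by
      ext y
      simpa using LinearMap.congr_fun hχ (0, y))
    (fun χ => ⟨χ ∘ₗ LinearMap.fst R A B, by ext; simp⟩) (fun χ => by ext; simp)
    fun χ hχ => ⟨χ ∘ₗ LinearMap.inr R A B, by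
      ext x
      · exact (map_zero χ).trans (LinearMap.congr_fun hχ x).symm
      · simp⟩

namespace IsTrSyz

/-- The transposes form an exact sequence in the opposite order as soon as all functionals on
`N'` extend to `N`, since the connecting map is `Hom(N', R) → Ext¹(N'', R)`. -/
theorem exists_isSES_of_extension (h : IsSES f g)
    (hext : ∀ χ : N' →ₗ[R] R, ∃ ψ : N →ₗ[R] R, ∀ x, ψ (f x) = χ x)
    (h' : IsTrSyz (R := R) 0 N' Q') (h'' : IsTrSyz (R := R) 0 N'' Q'') :
    ∃ (Q : ModuleCat.{u} R) (a : Q'' →ₗ[R] Q) (b : Q →ₗ[R] Q'),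
      IsTrSyz (R := R) 0 N Q ∧ IsSES a b := by
  obtain ⟨G₁', G₀', d', e', π', _, _, _, _, h', hπ'⟩ := h'
  obtain ⟨G₁'', G₀'', d'', e'', π'', _, _, _, _, h'', hπ''⟩ := h''
  obtain ⟨d, e, hde, hd, hd₂, he⟩ := h.exists_presentation h' h''
  have hδ (ψ : Module.Dual R (G₀' × G₀''))
      (hψ : d'.dualMap ((LinearMap.inl R G₀' G₀'').dualMap ψ) = 0) :
      ∃ χ, d.dualMap ψ = (LinearMap.snd R G₁' G₁'').dualMap (d''.dualMap χ) := by
    obtain ⟨χ, hχ⟩ := h'.exists_desc (ψ ∘ₗ LinearMap.inl R G₀' G₀'') (LinearMap.congr_fun hψ)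
    obtain ⟨χ', hχ'⟩ := hext χ
    obtain ⟨ρ, hρ⟩ := isSES_dualMap_snd_inl.exists_preimage (b := ψ - χ' ∘ₗ e) (by
      ext x
      simpa [he, hχ', sub_eq_zero] using (hχ x).symm)
    refine ⟨ρ, LinearMap.ext fun x => ?_⟩
    simpa [hde.exact.apply_apply_eq_zero, hd₂] using (LinearMap.congr_fun hρ (d x)).symm
  obtain ⟨a, b, hab⟩ := IsSES.exists_isSES_coker hπ'' (.of_range_mkQ d.dualMap) hπ'
    (i₀ := (LinearMap.snd R G₀' G₀'').dualMap) (r₀ := (LinearMap.inl R G₀' G₀'').dualMap)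
    isSES_dualMap_snd_inl.2.1 isSES_dualMap_snd_inl
    (fun χ => LinearMap.ext fun x => by simp [hd₂]) (fun χ => by ext x; simp [hd]) hδ
  exact ⟨ModuleCat.of R (Module.Dual R (G₁' × G₁'') ⧸ LinearMap.range d.dualMap), a, b,
    .zero hde (.of_range_mkQ _), hab⟩

variable {n : ℕ}

theorem exists_isSES (h : IsSES f g) (hext : ExtVanishes (R := R) n N')
    (h' : IsTrSyz (R := R) n N' Q') (h'' : IsTrSyz (R := R) n N'' Q'') :
    ∃ (Q : ModuleCat.{u} R) (a : Q'' →ₗ[R] Q) (b : Q →ₗ[R] Q'),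
      IsTrSyz (R := R) n N Q ∧ IsSES a b := by
  induction n generalizing N N' N'' with
  | zero =>
    exact exists_isSES_of_extension h (fun χ => ⟨0, by simp [hext.linearMap_eq_zero χ]⟩) h' h''
  | succ n ih =>
    obtain ⟨K', F', i', π', _, _, hi', hK'⟩ := h'
    obtain ⟨K'', F'', i'', π'', _, _, hi'', hK''⟩ := h''
    obtain ⟨K, i, π, fK, gK, hi, hK, hif, -⟩ := horseshoe h hi' hi''
    obtain ⟨Q, a, b, hQ, hab⟩ : ∃ (Q : ModuleCat.{u} R) (a : Q'' →ₗ[R] Q) (b : Q →ₗ[R] Q'),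
        IsTrSyz (R := R) n K Q ∧ IsSES a b := by
      cases n with
      | zero =>
        refine exists_isSES_of_extension hK (fun χ => ?_) hK' hK''
        obtain ⟨ψ, hψ⟩ := hext.exists_extension hi' χ
        exact ⟨ψ ∘ₗ LinearMap.fst R F' F'' ∘ₗ i, fun x => by simp [hif, hψ]⟩
      | succ n => exact ih hK (hext.syzygy hi') hK' hK''
    exact ⟨Q, a, b, .succ hi hQ, hab⟩

end IsTrSyz

variable {𝒳 : Set (ModuleCat.{u} R)} {n : ℕ}

namespace TrSyzMem

theorem of_isSES (h𝒳 : IsResolving R 𝒳) (h : IsSES f g) (hext : ExtVanishes (R := R) n N')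
    (h' : TrSyzMem 𝒳 n N') (h'' : TrSyzMem 𝒳 n N'') : TrSyzMem 𝒳 n N := by
  obtain ⟨Q', hm', hQ'⟩ := h'
  obtain ⟨Q'', hm'', hQ''⟩ := h''
  obtain ⟨Q, a, b, hQ, hab⟩ := IsTrSyz.exists_isSES h hext hQ' hQ''
  exact ⟨Q, h𝒳.mem_of_isSES hab hm'' hm', hQ⟩

variable [IsNoetherianRing R]

theorem right_of_isSES (h𝒳 : IsResolving R 𝒳) (h : IsSES f g) [Module.Finite R N'']
    (hext : ExtVanishes (R := R) n N') (h' : TrSyzMem 𝒳 n N') (hN : TrSyzMem 𝒳 n N) :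
    TrSyzMem 𝒳 n N'' := by
  obtain ⟨Q', hm', hQ'⟩ := h'
  obtain ⟨Q'', hQ''⟩ := exists_isTrSyz R n N''
  obtain ⟨Q, a, b, hQ, hab⟩ := IsTrSyz.exists_isSES h hext hQ' hQ''
  exact ⟨Q'', h𝒳.mem_left_of_isSES hab (hN.mem h𝒳 hQ) hm', hQ''⟩

end TrSyzMem

/-- `Tr Ω^n N ∈ 𝒳` and `Ext^n(N, R) = 0`: together these conditions are closed under extensions,
whereas the first one alone is not. -/
structure IsAdmissible (𝒳 : Set (ModuleCat.{u} R)) (n : ℕ) (N : Type u) [AddCommGroup N]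
    [Module R N] : Prop where
  trSyzMem : TrSyzMem 𝒳 n N
  extVanishes : ExtVanishes (R := R) n N

namespace IsAdmissible

theorem of_isSES (h𝒳 : IsResolving R 𝒳) (h : IsSES f g) (h' : IsAdmissible 𝒳 n N')
    (h'' : IsAdmissible 𝒳 n N'') : IsAdmissible 𝒳 n N :=
  ⟨h'.1.of_isSES h𝒳 h h'.2 h''.1, h'.2.of_isSES h h''.2⟩

variable [IsNoetherianRing R]

theorem of_linearEquiv (h𝒳 : IsResolving R 𝒳) (e : A ≃ₗ[R] B) [Module.Finite R B]
    (hA : IsAdmissible 𝒳 n A) : IsAdmissible 𝒳 n B :=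
  ⟨hA.1.of_stableRetract h𝒳 (.of_linearEquiv e.symm), hA.2.of_linearEquiv e⟩

theorem of_quotient_prime (h𝒳 : IsResolving R 𝒳) {I : Ideal R}
    (hI : ∀ q : PrimeSpectrum R, I ≤ q.asIdeal → IsAdmissible 𝒳 n (R ⧸ q.asIdeal))
    (L : Type u) [AddCommGroup L] [Module R L] [hfin : Module.Finite R L]
    (hL : ∀ s ∈ I, ∀ x : L, s • x = 0) : IsAdmissible 𝒳 n L := by
  induction hfin using IsNoetherianRing.induction_on_isQuotientEquivQuotientPrime R with
  | subsingleton L => exact ⟨.of_projective h𝒳, .of_subsingleton⟩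
  | quotient L p e =>
    refine (hI p fun s hs => ?_).of_linearEquiv h𝒳 e.symm
    have hs : s • e.symm 1 = 0 := hL s hs _
    rw [← map_smul, LinearEquiv.map_eq_zero_iff] at hs
    rwa [← Ideal.Quotient.eq_zero_iff_mem, ← mul_one (Ideal.Quotient.mk p.asIdeal s)]
  | exact L₁ L₂ L₃ f g hf hg hfg h₁ h₃ =>
    refine of_isSES h𝒳 ⟨hf, hg, (LinearMap.exact_iff.1 hfg).symm⟩
      (h₁ fun s hs x => hf (by rw [map_smul, hL s hs, map_zero])) (h₃ fun s hs x => ?_)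
    obtain ⟨y, rfl⟩ := hg x
    rw [← map_smul, hL s hs, map_zero]

end IsAdmissible

end TransposesAndExtensions

section StableAnnihilatorsAndTransposes

variable {R} {A B C F K M X : Type u} [AddCommGroup A] [Module R A] [AddCommGroup B]
  [Module R B] [AddCommGroup C] [Module R C] [AddCommGroup F] [Module R F] [AddCommGroup K]
  [Module R K] [AddCommGroup M] [Module R M] [AddCommGroup X] [Module R X]

theorem IsRightExact.isSES_range_subtype {d : A →ₗ[R] B} {e : B →ₗ[R] C} (h : IsRightExact d e) :
    IsSES (LinearMap.range d).subtype e :=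
  ⟨Subtype.val_injective, h.surjective, by
    rw [Submodule.range_subtype, LinearMap.exact_iff.1 h.exact]⟩

theorem StableRetract.exists_extension {i : K →ₗ[R] F} {e : F →ₗ[R] A} (h : IsSES i e) {s : R}
    (hs : StableRetract s A PUnit.{u + 1}) (χ : K →ₗ[R] X) :
    ∃ ψ : F →ₗ[R] X, ∀ x, ψ (i x) = s • χ x := by
  obtain ⟨σ, hσ⟩ := hs.exists_section h.2.1
  obtain ⟨w, hw⟩ := h.exists_lift (s • LinearMap.id - σ ∘ₗ e) fun x => by simp [hσ]
  have hwi (x : K) : w (i x) = s • x := h.1 (by simp [hw, h.apply_apply_eq_zero])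
  exact ⟨χ ∘ₗ w, fun x => by simp [hwi]⟩

/-- The sequences `0 → L → Tr A → B → 0` and `0 → B → G → Tr K → 0` that relate the transposes of a
module and of its syzygy; here `L = Ext¹(A, R)`. -/
theorem IsTrSyz.exists_isSES_of_syzygy [IsNoetherianRing R] {i : K →ₗ[R] F} {e : F →ₗ[R] A}
    (h : IsSES i e) [Module.Finite R F] [Module.Projective R F]
    (hC : IsTrSyz (R := R) 0 K C) :
    ∃ (Q B G L : ModuleCat.{u} R) (l : L →ₗ[R] Q) (b : Q →ₗ[R] B) (β : B →ₗ[R] G)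
      (γ : G →ₗ[R] C), Module.Finite R G ∧ Module.Projective R G ∧ Module.Finite R L ∧
      IsTrSyz (R := R) 0 A Q ∧ IsSES l b ∧ IsSES β γ ∧
      ∀ s : R, StableRetract s A PUnit.{u + 1} → ∀ x : L, s • x = 0 := by
  obtain ⟨G₁, G₀, d, q, γ, _, _, _, _, hd, hγ⟩ := hC
  have hQ := IsRightExact.of_range_mkQ (i ∘ₗ q).dualMap
  obtain ⟨b, hb⟩ := hQ.exists_desc (X := LinearMap.range d.dualMap)
    d.dualMap.rangeRestrict fun φ => by
    ext x
    simp [hd.exact.apply_apply_eq_zero]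
  have hbs : Function.Surjective b := by
    rintro ⟨_, φ, rfl⟩
    exact ⟨_, hb φ⟩
  refine ⟨ModuleCat.of R (Module.Dual R G₀ ⧸ LinearMap.range (i ∘ₗ q).dualMap),
    ModuleCat.of R (LinearMap.range d.dualMap), ModuleCat.of R (Module.Dual R G₁),
    ModuleCat.of R (LinearMap.ker b), (LinearMap.ker b).subtype, b, _, γ,
    inferInstanceAs (Module.Finite R (Module.Dual R G₁)),
    inferInstanceAs (Module.Projective R (Module.Dual R G₁)),
    inferInstanceAs (Module.Finite R (LinearMap.ker b)),
    .zero (h.isRightExact.comp_surjective hd.surjective) hQ, isSES_ker_subtype hbs,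
    hγ.isSES_range_subtype, ?_⟩
  rintro s hs ⟨x, hx⟩
  obtain ⟨φ, rfl⟩ := hQ.surjective x
  have hφ : d.dualMap φ = 0 := congrArg Subtype.val ((hb φ).symm.trans hx)
  obtain ⟨χ, hχ⟩ := hd.exists_desc φ (LinearMap.congr_fun hφ)
  obtain ⟨ψ, hψ⟩ := StableRetract.exists_extension h hs χ
  have hsφ : (i ∘ₗ q).dualMap ψ = s • φ := by
    ext x
    simp [hψ, hχ]
  exact Subtype.ext <| by
    rw [Submodule.coe_smul, ← map_smul, ← hsφ, hQ.exact.apply_apply_eq_zero, Submodule.coe_zero]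

variable {𝒳 : Set (ModuleCat.{u} R)} {j : ℕ}

/-- `Tr Ω^j Tr A ∈ 𝒳`, for all choices of the transpose `Tr A`. -/
def TrSyzTrMem (𝒳 : Set (ModuleCat.{u} R)) (j : ℕ) (A : Type u) [AddCommGroup A] [Module R A] :
    Prop :=
  ∀ C : ModuleCat.{u} R, IsTrSyz (R := R) 0 A C → TrSyzMem 𝒳 j C

namespace TrSyzTrMem

theorem of_mem (hA : ModuleCat.of R A ∈ 𝒳) : TrSyzTrMem 𝒳 0 A :=
  fun _ hC => ⟨_, hA, hC.symm⟩

variable [IsNoetherianRing R]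

theorem mem (h𝒳 : IsResolving R 𝒳) [Module.Finite R A] (hA : TrSyzTrMem 𝒳 0 A) :
    ModuleCat.of R A ∈ 𝒳 := by
  obtain ⟨C, hC⟩ := exists_isTrSyz R 0 A
  exact (hA C hC).mem h𝒳 hC.symm

theorem of_isTrSyz (h𝒳 : IsResolving R 𝒳) (hC : IsTrSyz (R := R) 0 A C) (h : TrSyzMem 𝒳 j C) :
    TrSyzTrMem 𝒳 j A := fun C' hC' => by
  have := hC'.finite
  exact h.of_stableRetract h𝒳 (hC'.stableRetract hC (.of_linearEquiv (.refl R A)))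

variable [Module.Finite R A]

section Syzygy

variable {i : K →ₗ[R] F} {e : F →ₗ[R] A} (h : IsSES i e) [Module.Finite R F]
  [Module.Projective R F]
include h

theorem of_syzygy (h𝒳 : IsResolving R 𝒳) (hK : TrSyzTrMem 𝒳 (j + 1) K)
    (hA : ∀ q : PrimeSpectrum R, stableAnn 0 A ≤ q.asIdeal → IsAdmissible 𝒳 j (R ⧸ q.asIdeal)) :
    TrSyzTrMem 𝒳 j A := by
  have := h.finite_left
  obtain ⟨C, hC⟩ := exists_isTrSyz R 0 K
  obtain ⟨Q, B, G, L, l, b, β, γ, _, _, _, hQ, hl, hβ, hL⟩ := IsTrSyz.exists_isSES_of_syzygy h hC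
  have hadm := IsAdmissible.of_quotient_prime h𝒳 hA L hL
  exact .of_isTrSyz h𝒳 hQ (.of_isSES h𝒳 hl hadm.2 hadm.1 ((hK C hC).syzygy h𝒳 hβ))

theorem syzygy (h𝒳 : IsResolving R 𝒳) (hA : TrSyzTrMem 𝒳 j A)
    (hann : ∀ q : PrimeSpectrum R, stableAnn 0 A ≤ q.asIdeal → IsAdmissible 𝒳 j (R ⧸ q.asIdeal)) :
    TrSyzTrMem 𝒳 (j + 1) K := fun C hC => by
  obtain ⟨Q, B, G, L, l, b, β, γ, _, _, _, hQ, hl, hβ, hL⟩ := IsTrSyz.exists_isSES_of_syzygy h hC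
  have hadm := IsAdmissible.of_quotient_prime h𝒳 hann L hL
  have := hQ.finite
  have : Module.Finite R B := .of_surjective b hl.2.1
  exact .of_syzygy hβ (.right_of_isSES h𝒳 hl hadm.2 hadm.1 (hA Q hQ))

end Syzygy

theorem of_isAdmissible (h𝒳 : IsResolving R 𝒳) {m : ℕ}
    (hA : IsStableAnn m A (1 : R))
    (hann : ∀ (k : ℕ) (q : PrimeSpectrum R), stableAnn k A ≤ q.asIdeal →
      IsAdmissible 𝒳 (j + k) (R ⧸ q.asIdeal)) : TrSyzTrMem 𝒳 j A := by
  induction m generalizing j A with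
  | zero =>
    have : Module.Projective R A := StableRetract.one_punit_iff.1 hA
    exact .of_isTrSyz h𝒳 .punit_of_projective (.of_projective h𝒳)
  | succ m ih =>
    obtain ⟨K, F, i, e, _, _, h⟩ := exists_syzygy R A
    have := h.finite_left
    refine of_syzygy h h𝒳 (ih ((isStableAnn_succ_iff h).1 hA) fun k q hq => ?_) (hann 0)
    have := hann (k + 1) q fun s hs => hq ((isStableAnn_succ_iff h).1 hs)
    rwa [← add_assoc, add_right_comm] at this

end TrSyzTrMem

theorem IsResolving.mem_of_isAdmissible [IsNoetherianRing R] (h𝒳 : IsResolving R 𝒳)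
    [Module.Finite R M] {m : ℕ} (hM : IsStableAnn m M (1 : R))
    (hann : ∀ (k : ℕ) (q : PrimeSpectrum R), stableAnn k M ≤ q.asIdeal →
      IsAdmissible 𝒳 k (R ⧸ q.asIdeal)) : ModuleCat.of R M ∈ 𝒳 :=
  (TrSyzTrMem.of_isAdmissible (j := 0) h𝒳 hM (by simpa using hann)).mem h𝒳

end StableAnnihilatorsAndTransposes

section SyzygiesOfTransposes

variable {R} {N Q : Type u} [AddCommGroup N] [Module R N] [AddCommGroup Q] [Module R Q] {n : ℕ}
  {s : R}

theorem ExtVanishes.smul_eq_zero (h : ExtVanishes (R := R) 0 N)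
    (hs : StableRetract s N PUnit.{u + 1}) (x : N) : s • x = 0 := by
  obtain ⟨P, u, v, _, _, hvu⟩ := StableRetract.punit_iff.1 hs
  have hu : u x = 0 := (Module.forall_dual_apply_eq_zero_iff R _).1 fun φ =>
    LinearMap.congr_fun (h.linearMap_eq_zero (φ ∘ₗ u)) x
  rw [← hvu, hu, map_zero]

namespace IsTrSyz

/-- If `K` is the syzygy `i : K → G` of `N` and `d : G₁ → G₀` presents `K`, then `Ext¹(N, R) = 0`
says that functionals on `K` extend to `G`, so that the map from `Tr N` to the dual of `G₁` induced
by `d` is injective. -/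
theorem exists_isSES_of_extVanishes_one (h : IsTrSyz (R := R) 1 N Q)
    (hN : ExtVanishes (R := R) 1 N) :
    ∃ (Q' P : ModuleCat.{u} R) (a : Q' →ₗ[R] P) (b : P →ₗ[R] Q), Module.Finite R P ∧
      Module.Projective R P ∧ IsSES a b ∧ IsTrSyz (R := R) 0 N Q' := by
  obtain ⟨K, G, i, π, _, _, hi, G₁, G₀, d, e, γ, _, _, _, _, h', hγ⟩ := h
  have hC := IsRightExact.of_range_mkQ (i ∘ₗ e).dualMap
  obtain ⟨a, ha⟩ := hC.exists_desc d.dualMap fun φ => by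
    ext x; simp [h'.exact.apply_apply_eq_zero]
  refine ⟨ModuleCat.of R (Module.Dual R G₀ ⧸ LinearMap.range (i ∘ₗ e).dualMap),
    ModuleCat.of R (Module.Dual R G₁), a, γ, inferInstanceAs (Module.Finite R (Module.Dual R G₁)),
    inferInstanceAs (Module.Projective R (Module.Dual R G₁)),
    isSES_of_forall (fun x hx => ?_) hγ.surjective (fun x => ?_) fun φ hφ => ?_,
    zero (hi.isRightExact.comp_surjective h'.surjective) hC⟩
  · obtain ⟨φ, rfl⟩ := hC.surjective x
    rw [ha] at hx
    obtain ⟨χ, hχ⟩ := h'.exists_desc φ (LinearMap.congr_fun hx)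
    obtain ⟨ψ, hψ⟩ := hN.exists_extension hi χ
    have hφ : φ = (i ∘ₗ e).dualMap ψ := by ext x; simp [hψ, hχ]
    rw [hφ, hC.exact.apply_apply_eq_zero]
  · obtain ⟨φ, rfl⟩ := hC.surjective x
    rw [ha, hγ.exact.apply_apply_eq_zero]
  · obtain ⟨ψ, rfl⟩ := (hγ.exact φ).1 hφ
    exact ⟨_, ha ψ⟩

theorem exists_isSES_of_extVanishes (h : IsTrSyz (R := R) (n + 1) N Q)
    (hN : ExtVanishes (R := R) (n + 1) N) :
    ∃ (Q' P : ModuleCat.{u} R) (a : Q' →ₗ[R] P) (b : P →ₗ[R] Q), Module.Finite R P ∧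
      Module.Projective R P ∧ IsSES a b ∧ IsTrSyz (R := R) n N Q' := by
  induction n generalizing N with
  | zero => exact h.exists_isSES_of_extVanishes_one hN
  | succ n ih =>
    obtain ⟨K, G, i, π, _, _, hi, hK⟩ := h
    obtain ⟨Q', P, a, b, hPf, hPp, hab, hQ'⟩ := ih hK (hN.syzygy hi)
    exact ⟨Q', P, a, b, hPf, hPp, hab, succ hi hQ'⟩

theorem stableRetract_punit (h : IsTrSyz (R := R) n N Q) (hs : ∀ x : N, s • x = 0) :
    StableRetract s Q PUnit.{u + 1} :=
  h.stableRetract (punit_of_projective (F := PUnit.{u + 1})) (.of_comp 0 0 (by simp [hs]))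

variable [IsNoetherianRing R]

theorem isStableAnn_one (h : IsTrSyz (R := R) n N Q)
    (hN : ∀ j ≤ n, ExtVanishes (R := R) j N) : IsStableAnn (n + 1) Q (1 : R) := by
  induction n generalizing Q with
  | zero =>
    obtain ⟨G₁, G₀, d, e, γ, _, _, _, _, h', hγ⟩ := h
    have hd : IsSES d.dualMap γ := isSES_of_forall (fun φ hφ => by
      obtain ⟨χ, hχ⟩ := h'.exists_desc φ (LinearMap.congr_fun hφ)
      ext x
      simp [← hχ, (hN 0 le_rfl).linearMap_eq_zero χ]) hγ.surjective
      hγ.exact.apply_apply_eq_zero fun φ => (hγ.exact φ).1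
    exact (isStableAnn_succ_iff hd).2 (.of_projective 1)
  | succ n ih =>
    obtain ⟨Q', P, a, b, _, _, hab, hQ'⟩ := h.exists_isSES_of_extVanishes (hN _ le_rfl)
    exact (isStableAnn_succ_iff hab).2 (ih hQ' fun j hj => hN j (by omega))

theorem smul_eq_zero (h : IsTrSyz (R := R) n N Q) (hN : ∀ j ≤ n, ExtVanishes (R := R) j N)
    (hs : IsStableAnn n Q s) (x : N) : s • x = 0 := by
  induction n generalizing Q with
  | zero => exact (hN 0 le_rfl).smul_eq_zero (h.symm.stableRetract punit_of_projective hs) x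
  | succ n ih =>
    obtain ⟨Q', P, a, b, _, _, hab, hQ'⟩ := h.exists_isSES_of_extVanishes (hN _ le_rfl)
    exact ih hQ' (fun j hj => hN j (by omega)) ((isStableAnn_succ_iff hab).1 hs)

end IsTrSyz

end SyzygiesOfTransposes

section SMulPullback

variable {R} {F F' K M X : Type u} [AddCommGroup F] [Module R F] [AddCommGroup F'] [Module R F']
  [AddCommGroup K] [Module R K] [AddCommGroup M] [Module R M] [AddCommGroup X] [Module R X]

/-- The pullback of `π : F → X` along multiplication by `s` on `X`. -/
def smulPullback (s : R) (π : F →ₗ[R] X) : Submodule R (X × F) :=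
  LinearMap.ker (π ∘ₗ LinearMap.snd R X F - s • LinearMap.fst R X F)

namespace smulPullback

variable {π : F →ₗ[R] X} {s : R}

theorem mem_iff {x : X} {f : F} : (x, f) ∈ smulPullback s π ↔ π f = s • x := by
  simp [smulPullback, sub_eq_zero]

theorem isSES {i : K →ₗ[R] F} (h : IsSES i π) (s : R) :
    IsSES ((LinearMap.inr R X F ∘ₗ i).codRestrict (smulPullback s π) fun k => by
        simp [mem_iff, h.apply_apply_eq_zero])
      (LinearMap.fst R X F ∘ₗ (smulPullback s π).subtype) := by
  refine isSES_of_forall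
    (fun k hk => h.1 ((congrArg (fun z => z.1.2) hk).trans (map_zero i).symm)) (fun x => ?_)
    (fun _ => rfl) ?_
  · obtain ⟨f, hf⟩ := h.2.1 (s • x)
    exact ⟨⟨(x, f), mem_iff.2 hf⟩, rfl⟩
  · rintro ⟨⟨x, f⟩, hf⟩ (rfl : x = 0)
    obtain ⟨k, rfl⟩ := h.exists_preimage (b := f) (by rw [mem_iff.1 hf, smul_zero])
    exact ⟨k, rfl⟩

theorem stableRetract_punit [Module.Finite R F] [Module.Projective R F] (s : R)
    (π : F →ₗ[R] X) : StableRetract s (smulPullback s π) PUnit.{u + 1} := by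
  refine .of_factor (LinearMap.snd R X F ∘ₗ (smulPullback s π).subtype)
    ((π.prod (s • LinearMap.id)).codRestrict (smulPullback s π) fun f => by simp [mem_iff]) ?_
  rintro ⟨⟨x, f⟩, hf⟩
  simp [Subtype.ext_iff, mem_iff.1 hf]

theorem isSES_syzygy {i : K →ₗ[R] F} (h : IsSES i π) {π' : F' →ₗ[R] K}
    (h' : Function.Surjective π') (s : R) :
    IsSES (i.prodMap LinearMap.id ∘ₗ (smulPullback s π').subtype)
      (((π ∘ₗ LinearMap.fst R F F').prod (s • LinearMap.fst R F F' - i ∘ₗ π' ∘ₗ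
        LinearMap.snd R F F')).codRestrict (smulPullback s π) fun f => by
          simp [mem_iff, h.apply_apply_eq_zero]) := by
  refine isSES_of_forall ?_ ?_ ?_ ?_
  · rintro ⟨⟨k, f⟩, hk⟩ h0
    obtain rfl : f = 0 := congrArg Prod.snd h0
    obtain rfl : k = 0 := h.1 ((congrArg Prod.fst h0).trans (map_zero i).symm)
    rfl
  · rintro ⟨⟨x, f₁⟩, hf⟩
    obtain ⟨f, rfl⟩ := h.2.1 x
    rw [mem_iff] at hf
    obtain ⟨k, hk⟩ := h.exists_preimage (b := s • f - f₁) (by simp [hf])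
    obtain ⟨f', rfl⟩ := h' k
    exact ⟨(f, f'), Subtype.ext (by simp [hk])⟩
  · rintro ⟨⟨k, f⟩, hk⟩
    rw [mem_iff] at hk
    simp [Subtype.ext_iff, hk, h.apply_apply_eq_zero]
  · rintro ⟨f, f'⟩ h0
    obtain ⟨k, rfl⟩ := h.exists_preimage (b := f) (congrArg (fun z => z.1.1) h0)
    have hk : s • i k - i (π' f') = 0 := congrArg (fun z => z.1.2) h0
    exact ⟨⟨(k, f'), mem_iff.2 (h.1 (by rw [map_smul, ← sub_eq_zero.1 hk]))⟩, rfl⟩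

/-- Here `M` and the pullback are the two ends of the total complex of the square with edges
`π : F → M` and `g : X → M`, because `h` lifts multiplication by `s` to `X`. -/
theorem exists_isSES_of_lift [Module.Projective R F] {π : F →ₗ[R] M}
    (hπ : Function.Surjective π) {g : X →ₗ[R] M} (hg : Function.Surjective g) (h : M →ₗ[R] X)
    (hgh : ∀ m, g (h m) = s • m) :
    ∃ (a : smulPullback s π →ₗ[R] M × LinearMap.ker g × F)
      (b : M × LinearMap.ker g × F →ₗ[R] X), IsSES a b := by
  obtain ⟨φ, hφ⟩ := exists_projective_lift hg π
  let j : smulPullback s π →ₗ[R] LinearMap.ker g := ((h ∘ₗ LinearMap.fst R M F -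
    φ ∘ₗ LinearMap.snd R M F) ∘ₗ (smulPullback s π).subtype).codRestrict _ (by
      rintro ⟨⟨m, f⟩, hf⟩
      simp [hgh, hφ, mem_iff.1 hf])
  refine ⟨(LinearMap.fst R M F ∘ₗ (smulPullback s π).subtype).prod
    (j.prod (LinearMap.snd R M F ∘ₗ (smulPullback s π).subtype)),
    (-h).coprod ((LinearMap.ker g).subtype.coprod φ), isSES_of_forall ?_ ?_ ?_ ?_⟩
  · rintro ⟨⟨m, f⟩, hf⟩ h0
    obtain rfl : m = 0 := congrArg Prod.fst h0
    obtain rfl : f = 0 := congrArg (fun z => z.2.2) h0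
    rfl
  · intro x
    obtain ⟨f, hf⟩ := hπ (g x)
    exact ⟨(0, ⟨x - φ f, by simp [hφ, hf]⟩, f), by simp⟩
  · rintro ⟨⟨m, f⟩, hf⟩
    simp [j]
  · rintro ⟨m, ⟨k, hk⟩, f⟩ h0
    have h0 : -h m + (k + φ f) = 0 := h0
    have hm : s • m = π f := by
      have hgm := congrArg g h0
      simp only [map_add, map_neg, hgh, LinearMap.mem_ker.1 hk, hφ, map_zero, zero_add] at hgm
      exact neg_add_eq_zero.1 hgm
    obtain rfl : k = h m - φ f := by rw [← sub_eq_zero, ← h0]; abel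
    exact ⟨⟨(m, f), mem_iff.2 hm.symm⟩, rfl⟩

variable {𝒳 : Set (ModuleCat.{u} R)}

theorem mem_of_stableRetract (h𝒳 : IsResolving R 𝒳) [Module.Finite R F] [Module.Projective R F]
    {π : F →ₗ[R] M} (hπ : Function.Surjective π) (h : StableRetract s M X)
    (hX : ModuleCat.of R X ∈ 𝒳) (hs : ModuleCat.of R (smulPullback s π) ∈ 𝒳) :
    ModuleCat.of R M ∈ 𝒳 := by
  obtain ⟨P, u, v, _, _, hvu⟩ := h
  have hsurj : Function.Surjective (v.coprod π) := fun m =>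
    let ⟨f, hf⟩ := hπ m
    ⟨(0, f), by simp [hf]⟩
  have hXP : ModuleCat.of R ((X × P) × F) ∈ 𝒳 :=
    h𝒳.mem_prod (h𝒳.mem_prod hX h𝒳.mem_of_projective) h𝒳.mem_of_projective
  obtain ⟨a, b, hab⟩ := exists_isSES_of_lift hπ hsurj (u.prod 0) (s := s) (by simp [hvu])
  exact h𝒳.mem_of_retract (LinearMap.inl R M _) (LinearMap.fst R M _) (by simp)
    (h𝒳.mem_of_isSES hab hs hXP)

variable [IsNoetherianRing R]

theorem mem (h𝒳 : IsResolving R 𝒳) [Module.Finite R F] [Module.Projective R F]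
    (hπ : Function.Surjective π) (hX : ModuleCat.of R X ∈ 𝒳) (s : R) :
    ModuleCat.of R (smulPullback s π) ∈ 𝒳 :=
  h𝒳.mem_of_isSES (isSES (isSES_ker_subtype hπ) s) (h𝒳.mem_syzygy (isSES_ker_subtype hπ) hX) hX

theorem isStableAnn {n : ℕ} {t : R} [Module.Finite R F] [Module.Projective R F]
    [Module.Finite R X] (hπ : Function.Surjective π) (s : R) (ht : IsStableAnn n X t) :
    IsStableAnn n (smulPullback s π) (t * t) :=
  .mul_of_isSES (isSES (isSES_ker_subtype hπ) s)
    ((isStableAnn_succ_iff (isSES_ker_subtype hπ)).1 ht.succ) ht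

end smulPullback

end SMulPullback

section ExtClasses

variable {R} {X : Type u} [AddCommGroup X] [Module R X] {p : Ideal R} {n : ℕ} {J : Set R}

/-- Some class in `Ext^(n+1)(X, R)` is annihilated by `J` and has a nonzero image in
`Ext^(n+1)(X, κ(p))`. The class is represented by a functional `c` on an `(n+1)`-st syzygy `K ⊆ F`,
and nonvanishing is certified by an element `a` of `K ∩ pF` with `c a ∉ p`. -/
def HasExtClass (p : Ideal R) : ∀ (_ : ℕ) (_ : Set R) (X : Type u) [AddCommGroup X] [Module R X],
    Prop
  | 0, J, X, _, _ => ∃ (K F : ModuleCat.{u} R) (i : K →ₗ[R] F) (e : F →ₗ[R] X),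
      Module.Finite R F ∧ Module.Projective R F ∧ IsSES i e ∧ ∃ (a : K) (c : K →ₗ[R] R),
      i a ∈ p • (⊤ : Submodule R F) ∧ c a ∉ p ∧ ∀ x ∈ J, ∃ ψ : F →ₗ[R] R, ∀ k, ψ (i k) = x * c k
  | n + 1, J, X, _, _ => ∃ (K F : ModuleCat.{u} R) (i : K →ₗ[R] F) (e : F →ₗ[R] X),
      Module.Finite R F ∧ Module.Projective R F ∧ IsSES i e ∧ HasExtClass p n J K

namespace HasExtClass

theorem span (h : HasExtClass p n J X) : HasExtClass p n (Ideal.span J : Set R) X := by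
  induction n generalizing X with
  | zero =>
    obtain ⟨K, F, i, e, hFf, hFp, hi, a, c, ha, hc, hJ⟩ := h
    refine ⟨K, F, i, e, hFf, hFp, hi, a, c, ha, hc, fun x hx => ?_⟩
    induction hx using Submodule.span_induction with
    | mem x hx => exact hJ x hx
    | zero => exact ⟨0, by simp⟩
    | add x y _ _ hx hy =>
      obtain ⟨ψ, hψ⟩ := hx
      obtain ⟨ψ', hψ'⟩ := hy
      exact ⟨ψ + ψ', fun k => by simp [hψ, hψ', add_mul]⟩
    | smul r x _ hx =>
      obtain ⟨ψ, hψ⟩ := hx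
      exact ⟨r • ψ, fun k => by simp [hψ, mul_assoc]⟩
  | succ n ih =>
    obtain ⟨K, F, i, e, hFf, hFp, hi, hK⟩ := h
    exact ⟨K, F, i, e, hFf, hFp, hi, ih hK⟩

variable [IsNoetherianRing R]

/-- Pulling back along multiplication by `x` multiplies the given class by `x`. -/
theorem exists_smulPullback (h : HasExtClass p n J X) {x : R} (hx : x ∈ p) :
    ∃ (F : ModuleCat.{u} R) (π : F →ₗ[R] X), Module.Finite R F ∧ Module.Projective R F ∧
      Function.Surjective π ∧ HasExtClass p n (insert x J) (smulPullback x π) := by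
  induction n generalizing X with
  | zero =>
    obtain ⟨K, F, i, e, hFf, hFp, hi, a, c, ha, hc, hJ⟩ := h
    have := hi.finite_left
    obtain ⟨_, F', _, π', _, _, h'⟩ := exists_syzygy R K
    obtain ⟨a', rfl⟩ := h'.2.1 a
    refine ⟨F, e, hFf, hFp, hi.2.1, ModuleCat.of R (smulPullback x π'), ModuleCat.of R (F × F'),
      _, _, inferInstanceAs (Module.Finite R (F × F')),
      inferInstanceAs (Module.Projective R (F × F')), smulPullback.isSES_syzygy hi h'.2.1 x,
      ⟨(π' a', x • a'), smulPullback.mem_iff.2 (by simp)⟩,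
      c ∘ₗ LinearMap.fst R K F' ∘ₗ (smulPullback x π').subtype, ?_, hc, ?_⟩
    · have hsum : (i (π' a'), x • a') =
        LinearMap.inl R F F' (i (π' a')) + x • ((0, a') : F × F') := by simp
      change (i (π' a'), x • a') ∈ _
      rw [hsum]
      exact add_mem (Submodule.smul_top_le_comap_smul_top p (LinearMap.inl R F F') ha)
        (Submodule.smul_mem_smul hx trivial)
    · rintro y (rfl | hy)
      · refine ⟨c ∘ₗ π' ∘ₗ LinearMap.snd R F F', ?_⟩
        rintro ⟨⟨k, f⟩, hk⟩
        simp [smulPullback.mem_iff.1 hk]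
      · obtain ⟨ψ, hψ⟩ := hJ y hy
        exact ⟨ψ ∘ₗ LinearMap.fst R F F', fun k => hψ k.1.1⟩
  | succ n ih =>
    obtain ⟨K, F, i, e, hFf, hFp, hi, hK⟩ := h
    obtain ⟨F', π', _, _, h', hK'⟩ := ih hK
    exact ⟨F, e, hFf, hFp, hi.2.1, ModuleCat.of R (smulPullback x π'), ModuleCat.of R (F × F'),
      _, _, inferInstanceAs (Module.Finite R (F × F')),
      inferInstanceAs (Module.Projective R (F × F')), smulPullback.isSES_syzygy hi h' x, hK'⟩

variable {𝒳 : Set (ModuleCat.{u} R)}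

theorem exists_of_finset (h𝒳 : IsResolving R 𝒳) (h : HasExtClass p n ∅ X)
    (hX : ModuleCat.of R X ∈ 𝒳) (S : Finset R) (hS : ∀ x ∈ S, x ∈ p) :
    ∃ X' ∈ 𝒳, HasExtClass p n (S : Set R) X' ∧ ∀ x ∈ S, ∃ N, IsStableAnn 0 X' (x ^ N) := by
  classical
  induction S using Finset.induction_on with
  | empty => exact ⟨ModuleCat.of R X, hX, by simpa using h, by simp⟩
  | insert x S hx ih =>
    obtain ⟨X', hX', hS', hann⟩ := ih fun y hy => hS y (Finset.mem_insert_of_mem hy)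
    obtain ⟨F, π, _, _, hπ, hF⟩ := hS'.exists_smulPullback (hS x (Finset.mem_insert_self x S))
    have := h𝒳.fg X' hX'
    refine ⟨ModuleCat.of R (smulPullback x π), smulPullback.mem h𝒳 hπ hX' x, by simpa using hF,
      fun y hy => ?_⟩
    rcases Finset.mem_insert.1 hy with rfl | hy
    · exact ⟨1, by rw [pow_one]; exact smulPullback.stableRetract_punit y π⟩
    · obtain ⟨N, hN⟩ := hann y hy
      exact ⟨N + N, by rw [pow_add]; exact smulPullback.isStableAnn hπ x hN⟩

theorem exists_annihilated (h𝒳 : IsResolving R 𝒳) (h : HasExtClass p n ∅ X)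
    (hX : ModuleCat.of R X ∈ 𝒳) :
    ∃ X' ∈ 𝒳, ∃ _ : Module.Finite R X', HasExtClass p n (p : Set R) X' ∧
      ∀ q : PrimeSpectrum R, stableAnn 0 X' ≤ q.asIdeal → p ≤ q.asIdeal := by
  obtain ⟨S, rfl⟩ := (isNoetherianRing_iff_ideal_fg R).1 ‹_› p
  obtain ⟨X', hX', hS, hann⟩ := h.exists_of_finset h𝒳 hX S fun x hx => Ideal.subset_span hx
  refine ⟨X', hX', h𝒳.fg X' hX', hS.span, fun q hq => Submodule.span_le.2 fun x hx => ?_⟩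
  obtain ⟨N, hN⟩ := hann x hx
  exact q.2.mem_of_pow_mem N (hq hN)

/-- A class in `Ext¹(X, R)` annihilated by `p` is a map from `R ⧸ p` to the transpose of `X`, and
evaluation at the certifying element `a` maps the transpose back to `R ⧸ p`. -/
theorem exists_stableRetract (h : HasExtClass p 0 (p : Set R) X) :
    ∃ (C : ModuleCat.{u} R) (s : R), s ∉ p ∧ IsTrSyz (R := R) 0 X C ∧
      StableRetract s (R ⧸ p) C := by
  obtain ⟨K, F, i, e, _, _, hi, a, c, ha, hc, hp⟩ := h
  have := hi.finite_left
  obtain ⟨_, F', _, π', _, _, h'⟩ := exists_syzygy R K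
  obtain ⟨a', rfl⟩ := h'.2.1 a
  have hC := IsRightExact.of_range_mkQ (i ∘ₗ π').dualMap
  set γ := (LinearMap.range (i ∘ₗ π').dualMap).mkQ
  let φ := p.liftQ (LinearMap.toSpanSingleton R _ (γ (c ∘ₗ π'))) fun x hx => by
    obtain ⟨ψ, hψ⟩ := hp x hx
    have hc' : x • (c ∘ₗ π') = (i ∘ₗ π').dualMap ψ := by ext z; simp [hψ]
    rw [LinearMap.mem_ker, LinearMap.toSpanSingleton_apply, ← map_smul, hc',
      hC.exact.apply_apply_eq_zero]
  obtain ⟨b, hb⟩ := hC.exists_desc (p.mkQ ∘ₗ Module.Dual.eval R F' a') fun ψ => by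
    have hψ : ψ (i (π' a')) ∈ p := by
      simpa using Submodule.smul_top_le_comap_smul_top p ψ ha
    exact Ideal.Quotient.eq_zero_iff_mem.2 hψ
  refine ⟨ModuleCat.of R (Module.Dual R F' ⧸ LinearMap.range (i ∘ₗ π').dualMap), c (π' a'), hc,
    .zero (hi.isRightExact.comp_surjective h'.2.1) hC, .of_comp φ b fun x => ?_⟩
  obtain ⟨r, rfl⟩ := Submodule.mkQ_surjective p x
  calc b (φ (p.mkQ r)) = b (r • γ (c ∘ₗ π')) := rfl
    _ = r • p.mkQ (c (π' a')) := by rw [map_smul, hb]; rfl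
    _ = c (π' a') • p.mkQ r := by simp only [← map_smul, smul_eq_mul, mul_comm]

theorem exists_trSyzMem (h𝒳 : IsResolving R 𝒳) [Module.Finite R X] {j : ℕ}
    (h : HasExtClass p n (p : Set R) X) (hX : TrSyzTrMem 𝒳 j X)
    (hann : ∀ k < n, ∀ q : PrimeSpectrum R, stableAnn k X ≤ q.asIdeal →
      IsAdmissible 𝒳 (j + k) (R ⧸ q.asIdeal)) :
    ∃ (C : ModuleCat.{u} R) (s : R), s ∉ p ∧ TrSyzMem 𝒳 (j + n) C ∧
      StableRetract s (R ⧸ p) C := by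
  induction n generalizing X j with
  | zero =>
    obtain ⟨C, s, hs, hC, hr⟩ := h.exists_stableRetract
    exact ⟨C, s, hs, hX C hC, hr⟩
  | succ n ih =>
    obtain ⟨K, F, i, e, _, _, hi, hK⟩ := h
    have := hi.finite_left
    rw [← add_assoc, add_right_comm]
    refine ih hK (hX.syzygy hi h𝒳 (hann 0 n.succ_pos)) fun k hk q hq => ?_
    have := hann (k + 1) (by omega) q fun s hs => hq ((isStableAnn_succ_iff hi).1 hs)
    rwa [← add_assoc, add_right_comm] at this

end HasExtClass

end ExtClasses

section ExtClassExistence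

variable {R} {F K X : Type u} [AddCommGroup F] [Module R F] [AddCommGroup K] [Module R K]
  [AddCommGroup X] [Module R X] {p : Ideal R} [hp : p.IsPrime] {m n : ℕ}

/-- Linear algebra over the residue field at `p`, with denominators cleared. -/
theorem exists_mul_sub_sum_mem (u : Fin n → Module.Dual R K) (c : Module.Dual R K)
    (h : ∀ k, (∀ j, u j k ∈ p) → c k ∈ p) :
    ∃ t ∉ p, ∃ b : Fin n → R, ∀ k, t * c k - ∑ j, b j * u j k ∈ p := by
  induction n generalizing K with
  | zero => exact ⟨1, hp.one_notMem, 0, fun k => by simpa using h k (fun j => j.elim0)⟩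
  | succ n ih =>
    let K₀ : Submodule R K := Submodule.comap (u 0) p
    obtain ⟨t, ht, b, hb⟩ := ih (fun j => u j.succ ∘ₗ K₀.subtype) (c ∘ₗ K₀.subtype)
      fun k hk => h k (Fin.cases k.2 hk)
    let c' : K →ₗ[R] R := t • c - ∑ j, b j • u j.succ
    have hc' (k : K) : c' k = t * c k - ∑ j, b j * u j.succ k := by
      simp [c', LinearMap.sum_apply]
    have hc₀ (k : K) (hk : u 0 k ∈ p) : c' k ∈ p := hc' k ▸ hb ⟨k, hk⟩
    by_cases h₀ : ∀ k, u 0 k ∈ p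
    · refine ⟨t, ht, Fin.cons 0 b, fun k => ?_⟩
      simpa [Fin.sum_univ_succ, hc'] using hc₀ k (h₀ k)
    · push Not at h₀
      obtain ⟨k₀, hk₀⟩ := h₀
      refine ⟨u 0 k₀ * t, fun h => (hp.mem_or_mem h).elim hk₀ ht,
        Fin.cons (c' k₀) fun j => u 0 k₀ * b j, fun k => ?_⟩
      have hk := hc₀ (u 0 k₀ • k - u 0 k • k₀) (by simp [mul_comm])
      rw [map_sub, map_smul, map_smul, smul_eq_mul, smul_eq_mul, hc' k] at hk
      convert hk using 1
      simp only [Fin.sum_univ_succ, Fin.cons_zero, Fin.cons_succ, mul_sub, Finset.mul_sum,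
        mul_assoc]
      ring

theorem exists_smul_sub_mem_smul_top (u : K →ₗ[R] Fin n → R) (v : K →ₗ[R] Fin m → R)
    (h : ∀ (c : Module.Dual R K) (k : K), (∀ j, u k j ∈ p) → c k ∈ p) :
    ∃ t ∉ p, ∃ b : (Fin n → R) →ₗ[R] Fin m → R,
      ∀ k, t • v k - b (u k) ∈ p • (⊤ : Submodule R (Fin m → R)) := by
  choose t ht b hb using fun l => exists_mul_sub_sum_mem (fun j => LinearMap.proj j ∘ₗ u)
    (LinearMap.proj l ∘ₗ v) fun k => h _ k
  refine ⟨∏ l, t l, fun h => ?_, LinearMap.pi fun l =>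
    (∏ l' ∈ Finset.univ.erase l, t l') • ∑ j, b l j • LinearMap.proj j, fun k => ?_⟩
  · obtain ⟨l, -, hl⟩ := hp.prod_mem_iff.1 h
    exact ht l hl
  · rw [pi_eq_sum_univ' (_ - _)]
    refine Submodule.sum_mem _ fun l _ => Submodule.smul_mem_smul ?_ trivial
    convert p.mul_mem_left (∏ l' ∈ Finset.univ.erase l, t l') (hb l k) using 1
    simp [LinearMap.sum_apply, mul_sub, ← mul_assoc, Finset.prod_erase_mul]

open Polynomial in
theorem eval_notMem_of_monic {χ : R[X]} (hχ : χ.Monic) (hcoeff : ∀ k < χ.natDegree, χ.coeff k ∈ p)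
    {τ : R} (hτ : τ ∉ p) : χ.eval τ ∉ p := fun h => by
  have hmap : χ.map (Ideal.Quotient.mk p) = X ^ χ.natDegree := by
    ext k
    rw [coeff_map, coeff_X_pow]
    rcases lt_trichotomy k χ.natDegree with hk | rfl | hk
    · rw [if_neg hk.ne, Ideal.Quotient.eq_zero_iff_mem.2 (hcoeff k hk)]
    · rw [if_pos rfl, hχ.coeff_natDegree, map_one]
    · rw [if_neg hk.ne', coeff_eq_zero_of_natDegree_lt hk, map_zero]
  rw [← Ideal.Quotient.eq_zero_iff_mem, ← eval_map_apply, hmap, eval_pow, eval_X, ← map_pow,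
    Ideal.Quotient.eq_zero_iff_mem] at h
  exact hτ (hp.mem_of_pow_mem _ h)

open Polynomial in
/-- If `χ` is the characteristic polynomial of `τ - θ`, then `χ(τ) ≡ τ ^ deg χ` modulo `p`, and
`χ(τ)` is divisible by `θ` because `χ(τ - θ) = 0`. -/
theorem exists_comp_eq_smul [Module.Finite R K] (θ : K →ₗ[R] K) {τ : R} (hτ : τ ∉ p)
    (h : ∀ k, τ • k - θ k ∈ p • (⊤ : Submodule R K)) :
    ∃ ρ : K →ₗ[R] K, ∃ t ∉ p, ∀ k, ρ (θ k) = t • k := by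
  let φ : Module.End R K := algebraMap R _ τ - θ
  obtain ⟨χ, hχ, -, hcoeff, hχφ⟩ :=
    LinearMap.exists_monic_and_natDegree_eq_and_coeff_mem_pow_and_aeval_eq_zero R φ p
      (LinearMap.range_le_iff_comap.2 (eq_top_iff.2 fun k _ => h k))
  obtain ⟨q, hq⟩ := X_sub_C_dvd_sub_C_eval (a := τ) (p := χ)
  refine ⟨aeval φ q, χ.eval τ, eval_notMem_of_monic hχ
    (fun k hk => Ideal.pow_le_self (by omega) (hcoeff k)) hτ, fun k => ?_⟩
  have hk := LinearMap.congr_fun (congrArg (aeval φ) (hq.trans (mul_comm _ _))) k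
  rw [map_sub, hχφ, map_mul, map_sub, aeval_X, aeval_C, aeval_C] at hk
  simp only [zero_sub, LinearMap.neg_apply, Module.algebraMap_end_apply, Module.End.mul_apply,
    φ, sub_sub_cancel_left, map_neg] at hk
  exact (neg_injective hk).symm

theorem exists_retraction [Module.Finite R K] {s : R} (hs : StableRetract s K PUnit.{u + 1})
    (hsp : s ∉ p) (u : K →ₗ[R] Fin n → R)
    (h : ∀ (c : Module.Dual R K) (k : K), (∀ j, u k j ∈ p) → c k ∈ p) :
    ∃ r : (Fin n → R) →ₗ[R] K, ∃ t ∉ p, ∀ k, r (u k) = t • k := by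
  obtain ⟨m, g, hg⟩ := Module.Finite.exists_fin' R K
  obtain ⟨σ, hσ⟩ := hs.exists_section hg
  obtain ⟨t, ht, b, hb⟩ := exists_smul_sub_mem_smul_top u σ h
  obtain ⟨ρ, t', ht', hρ⟩ := exists_comp_eq_smul (g ∘ₗ b ∘ₗ u) (τ := t * s)
    (fun h => (hp.mem_or_mem h).elim ht hsp) fun k => by
      have hk := Submodule.smul_top_le_comap_smul_top p g (hb k)
      rwa [Submodule.mem_comap, map_sub, map_smul, hσ, ← mul_smul] at hk
  exact ⟨ρ ∘ₗ g ∘ₗ b, t', ht', hρ⟩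

omit hp in
theorem StableRetract.punit_of_retraction [Module.Finite R F] [Module.Projective R F]
    {i : K →ₗ[R] F} {e : F →ₗ[R] X} (h : IsSES i e) (r : F →ₗ[R] K) {t : R}
    (hr : ∀ k, r (i k) = t • k) : StableRetract t X PUnit.{u + 1} := by
  obtain ⟨v, hv⟩ := h.exists_desc (t • LinearMap.id - i ∘ₗ r) fun k => by simp [hr]
  refine .of_factor v e fun x => ?_
  obtain ⟨f, rfl⟩ := h.2.1 x
  simp [hv, h.apply_apply_eq_zero]

variable [IsNoetherianRing R] [Module.Finite R X]

namespace HasExtClass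

theorem of_stableAnn_zero (h₀ : stableAnn 0 X ≤ p) (h₁ : ¬ stableAnn 1 X ≤ p) :
    HasExtClass p 0 ∅ X := by
  obtain ⟨n, e, he⟩ := Module.Finite.exists_fin' R X
  have hses := isSES_ker_subtype he
  have := hses.finite_left
  obtain ⟨s, hs, hsp⟩ := SetLike.not_le_iff_exists.1 h₁
  by_contra hcon
  obtain ⟨r, t, ht, hr⟩ := exists_retraction ((isStableAnn_succ_iff hses).1 hs) hsp
    (LinearMap.ker e).subtype fun c k hk => by
      by_contra hck
      refine hcon ⟨ModuleCat.of R (LinearMap.ker e), ModuleCat.of R (Fin n → R), _, e,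
        inferInstanceAs (Module.Finite R (Fin n → R)),
        inferInstanceAs (Module.Projective R (Fin n → R)), hses, k, c, ?_, hck, by simp⟩
      rw [pi_eq_sum_univ' ((LinearMap.ker e).subtype k)]
      exact Submodule.sum_mem _ fun j _ => Submodule.smul_mem_smul (hk j) trivial
  exact ht (h₀ (.punit_of_retraction hses r hr))

theorem of_stableAnn (h₀ : stableAnn n X ≤ p) (h₁ : ¬ stableAnn (n + 1) X ≤ p) :
    HasExtClass p n ∅ X := by
  induction n generalizing X with
  | zero => exact of_stableAnn_zero h₀ h₁
  | succ n ih =>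
    obtain ⟨K, F, i, e, hFf, hFp, h⟩ := exists_syzygy R X
    have := h.finite_left
    exact ⟨K, F, i, e, hFf, hFp, h, ih (fun s hs => h₀ ((isStableAnn_succ_iff h).2 hs))
      fun hle => h₁ fun s hs => hle ((isStableAnn_succ_iff h).1 hs)⟩

end HasExtClass

end ExtClassExistence

section Grade

open RingTheory.Sequence

variable {R} {A K F X : Type u} [AddCommGroup A] [Module R A] [AddCommGroup K] [Module R K]
  [AddCommGroup F] [Module R F] [AddCommGroup X] [Module R X] {rs : List R}
  {i : K →ₗ[R] F} {e : F →ₗ[R] A}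

namespace IsSES

theorem mapQ_ofList_injective (h : IsSES i e) (hA : IsWeaklyRegular A rs) :
    Function.Injective (Submodule.mapQ _ _ i
      (Submodule.smul_top_le_comap_smul_top (Ideal.ofList rs) i)) := by
  refine (injective_iff_map_eq_zero _).2 fun x hx => ?_
  obtain ⟨y, rfl⟩ := (map_first_exact_on_four_term_right_exact_of_isSMulRegular_last
    (f₁ := (0 : PUnit.{u + 1} →ₗ[R] K)) (fun k => by simp [h.1.eq_iff' (map_zero i), eq_comm])
    h.exact h.2.1 hA x).1 hx
  obtain ⟨y, rfl⟩ := Submodule.Quotient.mk_surjective _ y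
  simp

theorem isWeaklyRegular_left_concat (h : IsSES i e) {r : R} (hA : IsWeaklyRegular A rs)
    (hK : IsWeaklyRegular K rs) (hF : IsWeaklyRegular F (rs ++ [r])) :
    IsWeaklyRegular K (rs ++ [r]) := by
  rw [isWeaklyRegular_append_iff, isWeaklyRegular_singleton_iff] at hF ⊢
  exact ⟨hK, hF.2.of_injective _ (h.mapQ_ofList_injective hA)⟩

theorem isWeaklyRegular_left (h : IsSES i e) (hA : IsWeaklyRegular A rs)
    (hF : IsWeaklyRegular F rs) : IsWeaklyRegular K rs := by
  induction rs using List.reverseRecOn with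
  | nil => exact .nil R K
  | append_singleton rs r ih =>
    have hA' := ((isWeaklyRegular_append_iff A rs [r]).1 hA).1
    exact h.isWeaklyRegular_left_concat hA'
      (ih hA' ((isWeaklyRegular_append_iff F rs [r]).1 hF).1) hF

end IsSES

theorem isWeaklyRegular_of_projective [Module.Projective R F] (h : IsWeaklyRegular R rs) :
    IsWeaklyRegular F rs :=
  ((TensorProduct.rid R F).isWeaklyRegular_congr rs).1 (h.isWeaklyRegular_lTensor (M₂ := F))

namespace HasExtClass

variable {q : Ideal R} {J : Set R} {z : R}

theorem not_of_isWeaklyRegular (hrs : IsWeaklyRegular X rs)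
    (hz : ∀ x, x * z ∈ Ideal.ofList rs ↔ x ∈ q) : ¬ HasExtClass q 0 J X := by
  rintro ⟨K, F, i, e, -, -, h, a, c, ha, hc, -⟩
  have hqz : q • (⊤ : Submodule R F) ≤
      (Ideal.ofList rs • (⊤ : Submodule R F)).comap (LinearMap.lsmul R F z) :=
    Submodule.smul_le.2 fun r hr x _ => by
      rw [Submodule.mem_comap, LinearMap.lsmul_apply, smul_smul, mul_comm]
      exact Submodule.smul_mem_smul ((hz r).2 hr) trivial
  have hza : z • a ∈ Ideal.ofList rs • (⊤ : Submodule R K) := by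
    rw [← Submodule.Quotient.mk_eq_zero]
    refine h.mapQ_ofList_injective hrs (((Submodule.Quotient.mk_eq_zero _).2 ?_).trans
      (map_zero _).symm)
    rw [map_smul]
    exact hqz ha
  have hcz := Submodule.smul_top_le_comap_smul_top _ c hza
  rw [Submodule.mem_comap, map_smul, smul_eq_mul, smul_eq_mul, Ideal.mul_top, mul_comm] at hcz
  exact hc ((hz _).1 hcz)

/-- Each syzygy of `X` allows one more element of `rs₁` in a sequence that is regular on it. Once
`rs₁` is exhausted, `z` carries `qF` into `rs F`, and the class at hand must vanish. -/
theorem not_of_isWeaklyRegular_append {m : ℕ} {rs₀ rs₁ : List R} (hX : IsWeaklyRegular X rs₀)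
    (hR : IsWeaklyRegular R (rs₀ ++ rs₁)) (hlen : rs₁.length ≤ m)
    (hz : ∀ x, x * z ∈ Ideal.ofList (rs₀ ++ rs₁) ↔ x ∈ q) : ¬ HasExtClass q m J X := by
  induction m generalizing X rs₀ rs₁ with
  | zero =>
    obtain rfl := List.eq_nil_of_length_eq_zero (Nat.le_zero.1 hlen)
    exact not_of_isWeaklyRegular hX (by simpa using hz)
  | succ m ih =>
    rintro ⟨K, F, i, e, -, _, h, hK⟩
    have hF := isWeaklyRegular_of_projective (F := F) hR
    have hK₀ := h.isWeaklyRegular_left hX ((isWeaklyRegular_append_iff F rs₀ rs₁).1 hF).1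
    cases rs₁ with
    | nil => exact ih hK₀ hR (Nat.zero_le m) hz hK
    | cons r rs₁ =>
      rw [List.append_cons] at hF hR hz
      exact ih (h.isWeaklyRegular_left_concat hX hK₀ ((isWeaklyRegular_append_iff F _ _).1 hF).1)
        hR (Nat.le_of_succ_le_succ hlen) hz hK

end HasExtClass

theorem length_le_gradeE {I : Ideal R} (h : ∀ r ∈ rs, r ∈ I) (hreg : IsWeaklyRegular R rs) :
    (rs.length : ℕ∞) ≤ gradeE R I :=
  le_sSup ⟨rs, h, hreg, rfl⟩

theorem exists_length_eq_gradeE {I : Ideal R} (h : gradeE R I ≠ ⊤) :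
    ∃ rs : List R, (∀ r ∈ rs, r ∈ I) ∧ IsWeaklyRegular R rs ∧ (rs.length : ℕ∞) = gradeE R I := by
  have : Nonempty {x : ℕ∞ | ∃ rs : List R, (∀ r ∈ rs, r ∈ I) ∧ IsWeaklyRegular R rs ∧
      x = rs.length} := ⟨0, [], by simp, .nil R R, by simp⟩
  obtain ⟨rs, hrs, hreg, hlen⟩ :=
    ENat.sSup_mem_of_nonempty_of_lt_top (lt_top_iff_ne_top.2 h)
  exact ⟨rs, hrs, hreg, hlen.symm⟩

variable [IsNoetherianRing R] (p : Ideal R) [p.IsPrime]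

theorem gradeE_le_height : gradeE R p ≤ p.height := by
  refine sSup_le ?_
  rintro _ ⟨rs, hrs, hreg, rfl⟩
  have hreg' :=
    IsWeaklyRegular.isRegular_of_isLocalization_of_mem (Localization.AtPrime p) p hreg hrs
  have hdim := ringKrullDim_add_length_eq_ringKrullDim_of_isRegular _ hreg'
  have : Nontrivial (Localization.AtPrime p ⧸
      Ideal.ofList (rs.map (algebraMap R (Localization.AtPrime p)))) :=
    Ideal.Quotient.nontrivial_iff.2 (by simpa using hreg'.2.symm)
  rw [List.length_map,
    IsLocalization.AtPrime.ringKrullDim_eq_height p (Localization.AtPrime p)] at hdim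
  exact WithBot.coe_le_coe.1 ((le_add_of_nonneg_left ringKrullDim_nonneg_of_nontrivial).trans
    hdim.le)

theorem gradeE_ne_top : gradeE R p ≠ ⊤ :=
  ne_top_of_le_ne_top Ideal.height_ne_top_of_isPrime (gradeE_le_height p)

/-- A regular sequence of maximal length in `p` leaves only zero divisors in `p`, so that `p` lies
in an associated prime by prime avoidance. -/
theorem exists_mem_associatedPrimes_quotient_ofList :
    ∃ rs : List R, IsWeaklyRegular R rs ∧ (rs.length : ℕ∞) = gradeE R p ∧
      ∃ q ∈ associatedPrimes R (R ⧸ Ideal.ofList rs), p ≤ q := by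
  obtain ⟨rs, hrs, hreg, hlen⟩ := exists_length_eq_gradeE (gradeE_ne_top p)
  refine ⟨rs, hreg, hlen, (Ideal.subset_union_prime_finite
    (associatedPrimes.finite R (R ⧸ Ideal.ofList rs)) p p
    fun _ h _ _ => IsAssociatedPrime.isPrime h).1 ?_⟩
  rw [biUnion_associatedPrimes_eq_compl_regular R (R ⧸ Ideal.ofList rs)]
  intro x hx hxreg
  have hle := length_le_gradeE (rs := rs ++ [x]) (I := p)
    (List.forall_mem_append.2 ⟨hrs, by simpa using hx⟩)
    ((isWeaklyRegular_append_iff R _ _).2 ⟨hreg, (isWeaklyRegular_singleton_iff _ _).2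
      (by rw [smul_eq_mul, Ideal.mul_top]; exact hxreg)⟩)
  rw [← hlen, List.length_append, Nat.cast_le] at hle
  simp at hle

theorem lt_gradeE_of_isStableAnn [Module.Finite R X] {n m : ℕ} (h₀ : stableAnn n X ≤ p)
    (h₁ : IsStableAnn m X (1 : R)) : (n : ℕ∞) < gradeE R p := by
  obtain ⟨rs, hreg, hlen, q, hq, hpq⟩ := exists_mem_associatedPrimes_quotient_ofList p
  have hqp := hq.isPrime
  obtain ⟨z, hz⟩ := (isAssociatedPrime_iff.1 hq).2
  obtain ⟨z, rfl⟩ := Ideal.Quotient.mk_surjective z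
  have hz' : ∀ x, x * z ∈ Ideal.ofList rs ↔ x ∈ q := fun x => by
    rw [hz, Submodule.mem_colon_singleton, Submodule.mem_bot, ← Ideal.Quotient.eq_zero_iff_mem]
    rfl
  obtain ⟨k, hnk, hk⟩ : ∃ k ≥ n, stableAnn k X ≤ q ∧ ¬ stableAnn (k + 1) X ≤ q := by
    by_contra! hcon
    have hle : ∀ k ≥ n, stableAnn k X ≤ q :=
      fun k hk => Nat.le_induction (h₀.trans hpq) (fun k hk ih => hcon k hk ih) k hk
    exact hqp.one_notMem (hle (max n m) (le_max_left n m) (h₁.mono (le_max_right n m)))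
  rw [← hlen, Nat.cast_lt]
  by_contra! hlt
  exact HasExtClass.not_of_isWeaklyRegular_append (rs₀ := []) (.nil R X) hreg (hlt.trans hnk) hz'
    (HasExtClass.of_stableAnn hk.1 hk.2)

end Grade

section SupLocalPdim

variable {R} {𝒳 : Set (ModuleCat.{u} R)} {f : PrimeSpectrum R → ℕ} {p : PrimeSpectrum R}

theorem localPdim_self_nonneg (p : PrimeSpectrum R) : 0 ≤ localPdim R p (ModuleCat.of R R) := by
  refine le_sInf ?_
  rintro x (⟨-, h⟩ | ⟨n, rfl, -⟩)
  · have hp : p ∈ Module.support R R := by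
      simp [Module.support_eq_zeroLocus, Module.annihilator_eq_bot.2]
    exact absurd h (not_subsingleton_iff_nontrivial.2 (Module.mem_support_iff.1 hp))
  · exact_mod_cast Nat.zero_le n

/-- `f = φ(𝒳)`: the value of `f` at `p` is the supremum of `pd X_p` over `X ∈ 𝒳`. -/
def IsSupLocalPdim (𝒳 : Set (ModuleCat.{u} R)) (f : PrimeSpectrum R → ℕ) : Prop :=
  ∀ p, ((f p : ℕ∞) : WithBot ℕ∞) = ⨆ X ∈ 𝒳, localPdim R p X

theorem IsSupLocalPdim.subset_psiPd (hf : IsSupLocalPdim 𝒳 f) (h𝒳 : IsResolving R 𝒳) :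
    𝒳 ⊆ psiPd R f :=
  fun X hX => ⟨h𝒳.fg X hX, fun p => (le_iSup₂ X hX).trans (hf p).ge⟩

variable [IsNoetherianRing R]

theorem localPdim_le_gradeE {X : ModuleCat.{u} R} (hX : X ∈ PDcat R) (p : PrimeSpectrum R) :
    localPdim R p X ≤ (gradeE R p.asIdeal : WithBot ℕ∞) := by
  have := hX.1
  obtain ⟨m, hm⟩ := (mem_PDcat_iff X).1 hX
  obtain ⟨N, hN⟩ := ENat.ne_top_iff_exists.1 (gradeE_ne_top p.asIdeal)
  rw [← hN, localPdim_le_iff]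
  by_contra! hcon
  have hlt := lt_gradeE_of_isStableAnn p.asIdeal (X := X) (n := N)
    (fun s hs => by_contra fun hsp => hcon s hsp hs) hm
  exact hlt.ne hN

namespace IsSupLocalPdim

theorem exists_isStableAnn (hf : IsSupLocalPdim 𝒳 f) {X : ModuleCat.{u} R} [Module.Finite R X]
    (hX : X ∈ 𝒳) (p : PrimeSpectrum R) : ∃ s ∉ p.asIdeal, IsStableAnn (f p) X s :=
  (localPdim_le_iff X p (f p)).1 ((le_iSup₂ X hX).trans (hf p).ge)

theorem exists_stableAnn_le (hf : IsSupLocalPdim 𝒳 f) (h𝒳 : IsResolving R 𝒳) {n : ℕ}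
    (hn : n < f p) : ∃ X ∈ 𝒳, ∃ _ : Module.Finite R X, stableAnn n X ≤ p.asIdeal := by
  have hlt : ((n : ℕ∞) : WithBot ℕ∞) < ⨆ X ∈ 𝒳, localPdim R p X := by
    rw [← hf p]
    exact_mod_cast hn
  simp only [lt_iSup_iff] at hlt
  obtain ⟨X, hX, hlt⟩ := hlt
  have := h𝒳.fg X hX
  refine ⟨X, hX, this, fun s hs => by_contra fun hsp => ?_⟩
  exact hlt.not_ge ((localPdim_le_iff X p n).2 ⟨s, hsp, hs⟩)

theorem gradeConsistent (hf : IsSupLocalPdim 𝒳 f) (h𝒳 : 𝒳 ⊆ PDcat R) : GradeConsistent R f := by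
  refine ⟨fun p => WithBot.coe_le_coe.1 ?_, fun p q hpq => ?_⟩
  · rw [hf p]
    exact iSup₂_le fun X hX => localPdim_le_gradeE (h𝒳 hX) p
  · have hle : ((f p : ℕ∞) : WithBot ℕ∞) ≤ ((f q : ℕ∞) : WithBot ℕ∞) := by
      rw [hf p]
      refine iSup₂_le fun X hX => ?_
      have := (h𝒳 hX).1
      obtain ⟨s, hs, h⟩ := hf.exists_isStableAnn hX q
      exact (localPdim_le_iff X p (f q)).2 ⟨s, fun hsp => hs (hpq hsp), h⟩
    exact_mod_cast hle

end IsSupLocalPdim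

theorem IsResolving.exists_isSupLocalPdim (h𝒳 : IsResolving R 𝒳) (hpd : 𝒳 ⊆ PDcat R) :
    ∃ f, IsSupLocalPdim 𝒳 f := by
  suffices h : ∀ p, ∃ n : ℕ, ((n : ℕ∞) : WithBot ℕ∞) = ⨆ X ∈ 𝒳, localPdim R p X from
    Classical.skolem.1 h
  intro p
  have hle : ⨆ X ∈ 𝒳, localPdim R p X ≤ (gradeE R p.asIdeal : WithBot ℕ∞) :=
    iSup₂_le fun X hX => localPdim_le_gradeE (hpd hX) p
  have hnonneg : 0 ≤ ⨆ X ∈ 𝒳, localPdim R p X :=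
    (localPdim_self_nonneg p).trans (le_iSup₂_of_le _ h𝒳.mem_of_projective le_rfl)
  obtain ⟨v, hv⟩ := WithBot.ne_bot_iff_exists.1 (ne_bot_of_le_ne_bot WithBot.zero_ne_bot hnonneg)
  rw [← hv, WithBot.coe_le_coe] at hle
  obtain ⟨n, rfl⟩ := ENat.ne_top_iff_exists.1 (ne_top_of_le_ne_top (gradeE_ne_top p.asIdeal) hle)
  exact ⟨n, hv⟩

end SupLocalPdim

section TransposesOfPrimes

variable {R} {𝒳 : Set (ModuleCat.{u} R)} {f : PrimeSpectrum R → ℕ} {p : PrimeSpectrum R} {i k n : ℕ}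
  {s : R} {Q X : Type u} [AddCommGroup Q] [Module R Q] [AddCommGroup X] [Module R X]

namespace IsTrSyz

theorem stableRetract_punit_of_mem {p : Ideal R} (hQ : IsTrSyz (R := R) n (R ⧸ p) Q) (hs : s ∈ p) :
    StableRetract s Q PUnit.{u + 1} :=
  hQ.stableRetract_punit (Module.mem_annihilator.1 (Ideal.annihilator_quotient.ge hs))

variable [IsNoetherianRing R]

theorem isStableAnn_one_of_lt_gradeE {p : Ideal R} [p.IsPrime]
    (hQ : IsTrSyz (R := R) n (R ⧸ p) Q) (hn : n < gradeE R p) : IsStableAnn (n + 1) Q (1 : R) :=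
  hQ.isStableAnn_one fun _ hj => .quotient_of_lt_gradeE ((Nat.cast_le.2 hj).trans_lt hn)

theorem mem_of_isStableAnn {p : Ideal R} [p.IsPrime] (hQ : IsTrSyz (R := R) n (R ⧸ p) Q)
    (hn : n < gradeE R p) (hs : IsStableAnn n Q s) : s ∈ p :=
  Ideal.annihilator_quotient.le (Module.mem_annihilator.2 (hQ.smul_eq_zero
    (fun _ hj => .quotient_of_lt_gradeE ((Nat.cast_le.2 hj).trans_lt hn)) hs))

theorem mem_psiPd (hQ : IsTrSyz (R := R) n (R ⧸ p.asIdeal) Q) (hf : GradeConsistent R f)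
    (hn : n < f p) : ModuleCat.of R Q ∈ psiPd R f := by
  have hn' := (Nat.cast_lt.2 hn).trans_le (hf.1 p)
  have hfin : Module.Finite R (ModuleCat.of R Q) := hQ.finite
  refine mem_psiPd_iff.2 ⟨hfin, fun q => ?_⟩
  by_cases hpq : p.asIdeal ≤ q.asIdeal
  · exact ⟨1, q.isPrime.one_notMem,
      (hQ.isStableAnn_one_of_lt_gradeE hn').mono (hn.trans_le (hf.2 p q hpq))⟩
  · obtain ⟨s, hs, hsq⟩ := SetLike.not_le_iff_exists.1 hpq
    exact ⟨s, hsq, IsStableAnn.mono (n := 0) (Nat.zero_le _) (hQ.stableRetract_punit_of_mem hs)⟩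

end IsTrSyz

variable [IsNoetherianRing R]

theorem GradeConsistent.isSupLocalPdim_psiPd (hf : GradeConsistent R f) :
    IsSupLocalPdim (psiPd R f) f := by
  obtain ⟨g, hg⟩ := (isResolving_psiPd f).exists_isSupLocalPdim (psiPd_subset_PDcat f)
  suffices f = g from this ▸ hg
  funext p
  refine le_antisymm (not_lt.1 fun hlt => ?_) ?_
  · obtain ⟨Q, hQ⟩ := exists_isTrSyz R (g p) (R ⧸ p.asIdeal)
    have : Module.Finite R Q := hQ.finite
    obtain ⟨s, hs, h⟩ := hg.exists_isStableAnn (X := ModuleCat.of R Q) (hQ.mem_psiPd hf hlt) p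
    exact hs (hQ.mem_of_isStableAnn ((Nat.cast_lt.2 hlt).trans_le (hf.1 p)) h)
  · have hle : ((g p : ℕ∞) : WithBot ℕ∞) ≤ ((f p : ℕ∞) : WithBot ℕ∞) := by
      rw [hg p]
      exact iSup₂_le fun X hX => hX.2 p
    exact_mod_cast hle

theorem IsResolving.exists_mem_isStableAnn_add (h𝒳 : IsResolving R 𝒳) (k : ℕ)
    (hX : ModuleCat.of R X ∈ 𝒳) :
    ∃ X' ∈ 𝒳, ∀ n (s : R), IsStableAnn n X' s ↔ IsStableAnn (n + k) X s := by
  induction k generalizing X with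
  | zero => exact ⟨ModuleCat.of R X, hX, fun _ _ => Iff.rfl⟩
  | succ k ih =>
    have : Module.Finite R X := h𝒳.fg _ hX
    obtain ⟨K, F, i, e, _, _, h⟩ := exists_syzygy R X
    obtain ⟨X', hX', hiff⟩ := ih (h𝒳.mem_syzygy h hX)
    exact ⟨X', hX', fun n s => by rw [hiff, ← add_assoc, isStableAnn_succ_iff h]⟩

namespace IsSupLocalPdim

theorem exists_hasExtClass (hf : IsSupLocalPdim 𝒳 f) (h𝒳 : IsResolving R 𝒳) (hi : i < f p) :
    ∃ X ∈ 𝒳, HasExtClass p.asIdeal i ∅ X := by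
  obtain ⟨m, hm⟩ := Nat.exists_eq_add_of_lt hi
  obtain ⟨X, hX, _, hle⟩ := hf.exists_stableAnn_le h𝒳 (p := p) (n := i + m) (by omega)
  obtain ⟨s, hs, hsX⟩ := hf.exists_isStableAnn hX p
  obtain ⟨X', hX', hiff⟩ := h𝒳.exists_mem_isStableAnn_add m hX
  have := h𝒳.fg X' hX'
  refine ⟨X', hX', .of_stableAnn (fun t ht => hle ((hiff i t).1 ht)) fun hle' => hs (hle' ?_)⟩
  rw [mem_stableAnn, hiff]
  convert hsX using 1
  omega

theorem lt_of_stableAnn_le (hf : IsSupLocalPdim 𝒳 f) {X : ModuleCat.{u} R} [Module.Finite R X]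
    (hX : X ∈ 𝒳) (h : stableAnn k X ≤ p.asIdeal) : k < f p := by
  obtain ⟨s, hs, hsX⟩ := hf.exists_isStableAnn hX p
  exact not_le.1 fun hle => hs (h (hsX.mono hle))

theorem exists_stableRetract (hf : IsSupLocalPdim 𝒳 f) (h𝒳 : IsResolving R 𝒳) (hi : i < f p)
    (h : ∀ k < i, ∀ q : PrimeSpectrum R, p.asIdeal ≤ q.asIdeal → k < f q →
      IsAdmissible 𝒳 k (R ⧸ q.asIdeal)) :
    ∃ (C : ModuleCat.{u} R) (s : R), s ∉ p.asIdeal ∧ TrSyzMem 𝒳 i C ∧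
      StableRetract s (R ⧸ p.asIdeal) C := by
  obtain ⟨X, hX, hext⟩ := hf.exists_hasExtClass h𝒳 hi
  have := h𝒳.fg X hX
  obtain ⟨X', hX', _, hext', hann⟩ := hext.exists_annihilated h𝒳 hX
  simpa using hext'.exists_trSyzMem h𝒳 (.of_mem hX') fun k hk q hq => by
    simpa using h k hk q (hann q ((stableAnn_mono (Nat.zero_le k)).trans hq))
      (hf.lt_of_stableAnn_le hX' hq)

end IsSupLocalPdim

/-- The pullback of a cover of `Q = Tr Ω^i (R/p)` along multiplication by `s` has finite projective
dimension, and its stable annihilators contain both `s` and the squares of the elements of `p`. -/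
theorem TrSyzMem.quotient_of_stableRetract (h𝒳 : IsResolving R 𝒳) (hi : i < gradeE R p.asIdeal)
    (hs : s ∉ p.asIdeal) {C : ModuleCat.{u} R} (hC : TrSyzMem 𝒳 i C)
    (hr : StableRetract s (R ⧸ p.asIdeal) C)
    (h : ∀ k ≤ i, ∀ q : PrimeSpectrum R, p.asIdeal < q.asIdeal →
      IsAdmissible 𝒳 k (R ⧸ q.asIdeal)) :
    TrSyzMem 𝒳 i (R ⧸ p.asIdeal) := by
  obtain ⟨QC, hQC, hC⟩ := hC
  obtain ⟨Q, hQ⟩ := exists_isTrSyz R i (R ⧸ p.asIdeal)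
  have := hQ.finite
  obtain ⟨_, F, _, π, _, _, hπ⟩ := exists_syzygy R Q
  have hone : IsStableAnn (i + 1) (smulPullback s π) (1 : R) := by
    simpa using smulPullback.isStableAnn hπ.2.1 s (hQ.isStableAnn_one_of_lt_gradeE hi)
  have : Module.Finite R (smulPullback s π) := inferInstance
  refine ⟨Q, smulPullback.mem_of_stableRetract h𝒳 hπ.2.1 (hQ.stableRetract hC hr) hQC ?_, hQ⟩
  refine h𝒳.mem_of_isAdmissible hone fun k q hq => h k (not_lt.1 fun hk => ?_) q ?_
  · exact q.isPrime.one_notMem (hq (hone.mono hk))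
  · have hq₀ := (stableAnn_mono (Nat.zero_le k)).trans hq
    refine lt_of_le_of_ne (fun t ht => ?_) fun hpq => ?_
    · exact (q.isPrime.mem_or_mem (hq₀ (smulPullback.isStableAnn hπ.2.1 s
        (n := 0) (hQ.stableRetract_punit_of_mem ht)))).elim id id
    · exact hs (hpq ▸ hq₀ (smulPullback.stableRetract_punit s π))

namespace IsSupLocalPdim

theorem isAdmissible_quotient (hf : IsSupLocalPdim 𝒳 f) (h𝒳 : IsResolving R 𝒳)
    (hgc : GradeConsistent R f) (hi : i < f p) : IsAdmissible 𝒳 i (R ⧸ p.asIdeal) := by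
  induction p using (InvImage.wf PrimeSpectrum.asIdeal
    (wellFounded_gt (α := Ideal R))).induction generalizing i with
  | _ p ihp =>
  induction i using Nat.strong_induction_on with
  | _ i ihi =>
  have hgrade := (Nat.cast_lt.2 hi).trans_le (hgc.1 p)
  refine ⟨?_, .quotient_of_lt_gradeE hgrade⟩
  obtain ⟨C, s, hs, hC, hr⟩ := hf.exists_stableRetract h𝒳 hi fun k hk q hpq hkq => by
    rcases hpq.lt_or_eq with hlt | heq
    · exact ihp q hlt hkq
    · obtain rfl := PrimeSpectrum.ext heq
      exact ihi k hk hkq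
  exact hC.quotient_of_stableRetract h𝒳 hgrade hs hr fun k hk q hpq =>
    ihp q hpq ((hk.trans_lt hi).trans_le (hgc.2 p q hpq.le))

theorem psiPd_eq (hf : IsSupLocalPdim 𝒳 f) (h𝒳 : IsResolving R 𝒳) (hgc : GradeConsistent R f) :
    psiPd R f = 𝒳 := by
  refine (hf.subset_psiPd h𝒳).antisymm' fun M hM => ?_
  have := hM.1
  obtain ⟨m, hm⟩ := (mem_PDcat_iff M).1 (psiPd_subset_PDcat f hM)
  exact h𝒳.mem_of_isAdmissible hm fun k q hq =>
    hf.isAdmissible_quotient h𝒳 hgc (hgc.isSupLocalPdim_psiPd.lt_of_stableAnn_le hM hq)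

end IsSupLocalPdim

end TransposesOfPrimes

/-- Theorem 1.2: `φ` and `ψ` are mutually inverse bijections between the resolving
subcategories of `mod R` contained in `PD(R)` and the grade consistent functions
on `Spec R`. -/
theorem resolving_in_PD_classification [IsNoetherianRing R] :
    (∀ 𝒳 : Set (ModuleCat.{u} R), IsResolving R 𝒳 → 𝒳 ⊆ PDcat R →
      ∃ f : PrimeSpectrum R → ℕ, GradeConsistent R f ∧
        (∀ p : PrimeSpectrum R,
          ((f p : ℕ∞) : WithBot ℕ∞) = ⨆ X ∈ 𝒳, localPdim R p X) ∧
        psiPd R f = 𝒳) ∧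
    (∀ f : PrimeSpectrum R → ℕ, GradeConsistent R f →
      IsResolving R (psiPd R f) ∧ psiPd R f ⊆ PDcat R ∧
      (∀ p : PrimeSpectrum R,
        ((f p : ℕ∞) : WithBot ℕ∞) = ⨆ X ∈ psiPd R f, localPdim R p X)) := by
  refine ⟨fun 𝒳 h𝒳 hpd => ?_, fun f hf => ?_⟩
  · obtain ⟨f, hf⟩ := h𝒳.exists_isSupLocalPdim hpd
    have hgc := hf.gradeConsistent hpd
    exact ⟨f, hgc, hf, hf.psiPd_eq h𝒳 hgc⟩
  · exact ⟨isResolving_psiPd f, psiPd_subset_PDcat f, hf.isSupLocalPdim_psiPd⟩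

end ResolvPaper
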